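/- arXiv:1405.2999 — 2 statements merged into one kernel-verified Lean document; each statement's English description precedes it below -/
import Mathlib

section
/- Let n ≥ 2, M ≥ 1, let A = (a^{αβ}_{rs}) be a complex coefficient tensor, let E = (E_{γβ}) : ℝⁿ∖{0} → ℂ^{M×M} be C² with each ∂_r E_{γβ} positively homogeneous of degree 1-n, and suppose k = (k_{γα}) : ℝⁿ∖{0} → ℂ^{M×M} is continuous, positively homogeneous of degree -n, and satisfies Σ_{r,β} a^{βα}_{rs}(∂_r E_{γβ})(x) = x_s k_{γα}(x) for all x ∈ ℝⁿ∖{0}, all s, γ, α. Set P := 2k(·,1) on ℝ^{n-1} and Q^{(j)}(x') := ((∂_j E_{γβ})(x',1))_{γ,β}. Fix p ∈ (1,∞) and f = (f_α) ∈ L^p_1(ℝ^{n-1};ℂ^M). Then for every t > 0, every γ ∈ {1,…,M}, and every x' ∈ ℝ^{n-1}: (i) ∂_t[(P_t * f)_γ(x')] = -2 Σ_{s=1}^{n-1} Σ_{r,α,β} a^{βα}_{rs} ((Q^{(r)}_{γβ})_t * ∂_s f_α)(x'); and (ii) for every r ∈ {1,…,n-1}, ∂_t[(Q^{(r)}_t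 * f)_γ(x')] = (Q^{(n)}_t * (∂_r f))_γ(x'). -/
open MeasureTheory Filter Metric Real
open scoped ENNReal NNReal Topology

noncomputable section

/-- The point `(x', t)` of `ℝⁿ`, where `x' ∈ ℝ^{n-1}` and `t ∈ ℝ` is the last coordinate. -/
def toUp {n : ℕ} (x' : EuclideanSpace ℝ (Fin (n - 1))) (t : ℝ) :
    EuclideanSpace ℝ (Fin n) :=
  (WithLp.equiv 2 (Fin n → ℝ)).symm
    (fun i => if h : (i : ℕ) < n - 1 then x' ⟨i, h⟩ else t)

/-- The first `n-1` coordinates of a point of `ℝⁿ`. -/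
def xinit {n : ℕ} (x : EuclideanSpace ℝ (Fin n)) : EuclideanSpace ℝ (Fin (n - 1)) :=
  (WithLp.equiv 2 (Fin (n - 1) → ℝ)).symm
    (fun i => x ⟨(i : ℕ), Nat.lt_of_lt_of_le i.isLt (Nat.sub_le n 1)⟩)

/-- The last coordinate of a point of `ℝⁿ`. -/
def xlast {n : ℕ} (x : EuclideanSpace ℝ (Fin n)) : ℝ :=
  if h : 0 < n then x ⟨n - 1, by omega⟩ else 0

/-- The upper half space `ℝⁿ₊`. -/
def upperHalfSpace (n : ℕ) : Set (EuclideanSpace ℝ (Fin n)) := {x | 0 < xlast x}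

/-- The embedding `Fin (n-1) → Fin n`. -/
def finUp {n : ℕ} (i : Fin (n - 1)) : Fin n :=
  ⟨(i : ℕ), Nat.lt_of_lt_of_le i.isLt (Nat.sub_le n 1)⟩

/-- The last index of `Fin n`. -/
def lastIdx (n : ℕ) (h : 0 < n) : Fin n := ⟨n - 1, by omega⟩

/-- Partial derivative along the `i`-th coordinate direction. -/
def pd {n : ℕ} {F : Type*} [NormedAddCommGroup F] [NormedSpace ℝ F]
    (i : Fin n) (u : EuclideanSpace ℝ (Fin n) → F) (x : EuclideanSpace ℝ (Fin n)) : F :=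
  fderiv ℝ u x (EuclideanSpace.single i 1)

/-- Iterated mixed partial derivative along the string of coordinate directions `d`. -/
def mpd {n : ℕ} {F : Type*} [NormedAddCommGroup F] [NormedSpace ℝ F]
    (k : ℕ) (d : Fin k → Fin n) (u : EuclideanSpace ℝ (Fin n) → F)
    (x : EuclideanSpace ℝ (Fin n)) : F :=
  iteratedFDeriv ℝ k u x (fun i => EuclideanSpace.single (d i) 1)

/-- The nontangential approach filter for the cone `Γ_κ(x')` (points written as `(y', t)`). -/
def ntFilter {n : ℕ} (κ : ℝ) (x' : EuclideanSpace ℝ (Fin (n - 1))) :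
    Filter ((EuclideanSpace ℝ (Fin (n - 1))) × ℝ) :=
  (nhds (x', (0 : ℝ))) ⊓ Filter.principal {q | 0 < q.2 ∧ dist x' q.1 < κ * q.2}

/-- The nontangential maximal function (aperture `κ`) of `u : ℝⁿ → F`,
as an `ℝ≥0∞`-valued function on `ℝ^{n-1}`. -/
def ntMax {n : ℕ} {F : Type*} [NormedAddCommGroup F] (κ : ℝ)
    (u : EuclideanSpace ℝ (Fin n) → F) (x' : EuclideanSpace ℝ (Fin (n - 1))) : ℝ≥0∞ :=
  ⨆ (y' : EuclideanSpace ℝ (Fin (n - 1))) (t : ℝ) (_ : 0 < t ∧ dist x' y' < κ * t),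
    (‖u (toUp y' t)‖₊ : ℝ≥0∞)

/-- The `L^p` norm (`p ∈ (0,∞]`) of an `ℝ≥0∞`-valued function on `ℝ^m`. -/
def lpNormE {m : ℕ} (g : EuclideanSpace ℝ (Fin m) → ℝ≥0∞) (p : ℝ≥0∞) : ℝ≥0∞ :=
  if p = ∞ then essSup g volume
  else (∫⁻ x', (g x') ^ p.toReal) ^ (1 / p.toReal)

/-- The Hardy–Littlewood maximal function. -/
def hlMax {m : ℕ} {F : Type*} [NormedAddCommGroup F]
    (f : EuclideanSpace ℝ (Fin m) → F) (x' : EuclideanSpace ℝ (Fin m)) : ℝ≥0∞ :=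
  ⨆ (r : ℝ) (_ : 0 < r),
    (volume (ball x' r))⁻¹ * ∫⁻ y' in ball x' r, (‖f y'‖₊ : ℝ≥0∞)

/-- The Legendre-Hadamard ellipticity condition for the coefficient tensor `A`,
where `A r s α β` stands for `a^{αβ}_{rs}`. -/
def LegendreHadamard {n M : ℕ} (A : Fin n → Fin n → Fin M → Fin M → ℂ) : Prop :=
  ∃ κ₀ : ℝ, 0 < κ₀ ∧ ∀ (ξ : Fin n → ℝ) (η : Fin M → ℂ),
    κ₀ * (∑ r, ξ r ^ 2) * (∑ a, ‖η a‖ ^ 2) ≤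
      (∑ r, ∑ s, ∑ a, ∑ b, A r s a b * ξ r * ξ s * (starRingEnd ℂ) (η a) * η b).re

/-- `g` is the weak (distributional) mixed partial derivative of `f` of order `k`
along the string of directions `d`. -/
def IsWeakDeriv {m : ℕ} {F : Type*} [NormedAddCommGroup F] [NormedSpace ℝ F]
    (k : ℕ) (d : Fin k → Fin m) (f g : EuclideanSpace ℝ (Fin m) → F) : Prop :=
  ∀ φ : EuclideanSpace ℝ (Fin m) → ℝ, ContDiff ℝ (⊤ : ℕ∞) φ → HasCompactSupport φ →
    ∫ x', (mpd k d φ x') • f x' = ((-1 : ℝ) ^ k) • ∫ x', φ x' • g x'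

/-- The surface area `ω_{n-1}` of the unit sphere `S^{n-1}` in `ℝⁿ`. -/
def sphereArea (n : ℕ) : ℝ :=
  (n : ℝ) * (volume (ball (0 : EuclideanSpace ℝ (Fin n)) (1 : ℝ))).toReal

/-- The parabolic dilation `F_t(x') = t^{1-n} F(x'/t)` of a matrix-valued kernel. -/
def matDil {n M : ℕ} (P : EuclideanSpace ℝ (Fin (n - 1)) → Matrix (Fin M) (Fin M) ℂ)
    (t : ℝ) (x' : EuclideanSpace ℝ (Fin (n - 1))) : Matrix (Fin M) (Fin M) ℂ :=
  (t ^ ((1 : ℤ) - (n : ℤ))) • P (t⁻¹ • x')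

/-- The convolution `(P_t * f)(x')` of a dilated matrix kernel with a `ℂ^M`-valued function. -/
def matConv {n M : ℕ} (P : EuclideanSpace ℝ (Fin (n - 1)) → Matrix (Fin M) (Fin M) ℂ)
    (f : EuclideanSpace ℝ (Fin (n - 1)) → EuclideanSpace ℂ (Fin M))
    (t : ℝ) (x' : EuclideanSpace ℝ (Fin (n - 1))) : EuclideanSpace ℂ (Fin M) :=
  (WithLp.equiv 2 (Fin M → ℂ)).symm
    (fun γ => ∫ y', ∑ α, matDil P t (x' - y') γ α * f y' α)

/-- The auxiliary kernel `Q^{(j)}_{γβ}(x') := (∂_j E_{γβ})(x', 1)`. -/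
def Qker {n M : ℕ} (E : EuclideanSpace ℝ (Fin n) → Matrix (Fin M) (Fin M) ℂ)
    (j : Fin n) (γ β : Fin M) (x' : EuclideanSpace ℝ (Fin (n - 1))) : ℂ :=
  pd j (fun y => E y γ β) (toUp x' 1)

/-- The dilated auxiliary kernel `(Q^{(j)}_{γβ})_t(x') = t^{1-n} Q^{(j)}_{γβ}(x'/t)`,
viewed as a function of the point `x = (x', t) ∈ ℝⁿ₊`. -/
def QkerDil {n M : ℕ} (E : EuclideanSpace ℝ (Fin n) → Matrix (Fin M) (Fin M) ℂ)
    (j : Fin n) (γ β : Fin M) (x : EuclideanSpace ℝ (Fin n)) : ℂ :=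
  ((xlast x : ℂ) ^ ((1 : ℤ) - (n : ℤ))) * Qker E j γ β ((xlast x)⁻¹ • xinit x)

/-!
The dilates `P_t` and `(Q^{(j)}_{γβ})_t` are the slices at height `t` of the homogeneous functions
`2 x_n k` and `∂_j E_{γβ}` of degree `1 - n`, so `∂_t` turns into the normal derivative of these
functions under the integral sign. For `(ii)` one has `∂_n ∂_r E = ∂_r ∂_n E`. For `(i)`, Euler's
identity makes the field `(x_s k)_s` divergence free, as `k` has degree `-n`; hence
`∂_n (x_n k) = -∑_{s < n} ∂_s (x_s k)`, and `x_s k` is the given combination of the `∂_r E`. In both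
cases the tangential derivatives are then moved onto `f`. The kernels are not compactly supported
and only `C¹`, so they are mollified and cut off before the weak derivatives can be tested against
them; the error terms vanish because the slices decay like `(1 + |y|)^{1-n}`, and `f` and its
derivatives are integrable against that weight by Hölder's inequality.
-/

section PartialDerivatives

variable {n : ℕ} {F : Type*} [NormedAddCommGroup F] [NormedSpace ℝ F]
  {u : EuclideanSpace ℝ (Fin n) → F}

lemma pd_smul {c : EuclideanSpace ℝ (Fin n) → ℝ} {x : EuclideanSpace ℝ (Fin n)}
    (hc : DifferentiableAt ℝ c x) (hu : DifferentiableAt ℝ u x) (j : Fin n) :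
    pd j (fun y => c y • u y) x = c x • pd j u x + pd j c x • u x := by
  simp [pd, fderiv_fun_smul hc hu]

lemma pd_clm_comp {G : Type*} [NormedAddCommGroup G] [NormedSpace ℝ G] (L : F →L[ℝ] G)
    {x : EuclideanSpace ℝ (Fin n)} (hu : DifferentiableAt ℝ u x) (j : Fin n) :
    pd j (fun y => L (u y)) x = L (pd j u x) := by
  have h : HasFDerivAt (fun y => L (u y)) (L.comp (fderiv ℝ u x)) x :=
    L.hasFDerivAt.comp x hu.hasFDerivAt
  rw [pd, h.fderiv, ContinuousLinearMap.comp_apply, pd]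

lemma norm_pd_le_norm_fderiv (j : Fin n) (x : EuclideanSpace ℝ (Fin n)) :
    ‖pd j u x‖ ≤ ‖fderiv ℝ u x‖ :=
  (fderiv ℝ u x).unit_le_opNorm _ (by simp)

lemma continuous_pd (hu : ContDiff ℝ 1 u) (j : Fin n) : Continuous (pd j u) :=
  (hu.continuous_fderiv one_ne_zero).clm_apply continuous_const

lemma contDiffOn_pd {U : Set (EuclideanSpace ℝ (Fin n))} {m k : WithTop ℕ∞}
    (hu : ContDiffOn ℝ m u U) (hU : IsOpen U) (hk : k + 1 ≤ m) (j : Fin n) :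
    ContDiffOn ℝ k (pd j u) U :=
  (hu.fderiv_of_isOpen hU hk).clm_apply contDiffOn_const

lemma continuousOn_pd {U : Set (EuclideanSpace ℝ (Fin n))} (hu : ContDiffOn ℝ 1 u U)
    (hU : IsOpen U) (j : Fin n) : ContinuousOn (pd j u) U :=
  (contDiffOn_pd (k := 0) hu hU (zero_add 1).le j).continuousOn

lemma pd_comm {x : EuclideanSpace ℝ (Fin n)} (hu : ContDiffAt ℝ 2 u x) (i j : Fin n) :
    pd i (pd j u) x = pd j (pd i u) x := by
  have hd : DifferentiableAt ℝ (fderiv ℝ u) x :=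
    (hu.fderiv_right (m := 1) le_rfl).differentiableAt one_ne_zero
  have hsecond : ∀ i j, pd i (pd j u) x =
      fderiv ℝ (fderiv ℝ u) x (EuclideanSpace.single i 1) (EuclideanSpace.single j 1) := by
    intro i j
    have h : HasFDerivAt (pd j u) _ x := hd.hasFDerivAt.clm_apply
      (hasFDerivAt_const (EuclideanSpace.single j (1 : ℝ)) x)
    rw [pd, h.fderiv]
    simp
  rw [hsecond, hsecond, hu.isSymmSndFDerivAt (by simp)]

lemma sum_smul_pd (x : EuclideanSpace ℝ (Fin n)) : ∑ s, x s • pd s u x = fderiv ℝ u x x := by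
  conv_rhs => arg 2; rw [← (EuclideanSpace.basisFun (Fin n) ℝ).sum_repr x]
  simp [pd]

end PartialDerivatives

section Mollification

open scoped Convolution
open ContinuousLinearMap (lsmul)

variable {V F : Type*} [NormedAddCommGroup V] [NormedSpace ℝ V] [FiniteDimensional ℝ V]
  [HasContDiffBump V] [MeasurableSpace V] [BorelSpace V] [NormedAddCommGroup F] [NormedSpace ℝ F]
  {μ : Measure V} [μ.IsAddHaarMeasure]

lemma norm_normed_convolution_le (b : ContDiffBump (0 : V)) {h : V → ℝ} (hh : Continuous h)
    {x : V} {ε : ℝ} (hε : 0 ≤ ε) (hle : ∀ y ∈ ball x b.rOut, ‖h y‖ ≤ ε) :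
    ‖(b.normed μ ⋆[lsmul ℝ ℝ, μ] h) x‖ ≤ ε := by
  simpa only [dist_zero_right] using dist_convolution_le (μ := μ) (z₀ := (0 : ℝ)) hε
    b.support_normed_eq.subset b.nonneg_normed b.integral_normed hh.aestronglyMeasurable
    (by simpa only [dist_zero_right] using hle)

lemma tendsto_integral_normed_convolution_smul {ι : Type*} {l : Filter ι} [l.IsCountablyGenerated]
    {b : ι → ContDiffBump (0 : V)} (hb : Tendsto (fun i => (b i).rOut) l (𝓝 0)) {h : V → ℝ}
    (hh : Continuous h) (hsupp : HasCompactSupport h) {f : V → F} (hf : LocallyIntegrable f μ) :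
    Tendsto (fun i => ∫ x, ((b i).normed μ ⋆[lsmul ℝ ℝ, μ] h) x • f x ∂μ) l
      (𝓝 (∫ x, h x • f x ∂μ)) := by
  obtain ⟨C, hC⟩ := hsupp.exists_bound_of_continuous hh
  set K := cthickening 1 (tsupport h)
  have hK : IsCompact K := hsupp.isCompact.cthickening
  refine tendsto_integral_filter_of_dominated_convergence (K.indicator fun x => C * ‖f x‖)
    (.of_forall fun i => ?_) ?_ ?_ (.of_forall fun x => ?_)
  · exact ((b i).hasCompactSupport_normed.continuous_convolution_left _ (b i).continuous_normed
      hh.locallyIntegrable).aestronglyMeasurable.smul hf.aestronglyMeasurable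
  · filter_upwards [hb.eventually_le_const one_pos] with i hi
    refine .of_forall fun x => ?_
    rw [norm_smul]
    by_cases hx : x ∈ K
    · rw [Set.indicator_of_mem hx]
      gcongr
      exact norm_normed_convolution_le _ hh ((norm_nonneg _).trans (hC x)) fun y _ => hC y
    · have hzero : ∀ y ∈ ball x (b i).rOut, ‖h y‖ ≤ 0 := fun y hy => by
        have hy' : y ∉ tsupport h := fun hmem => hx <|
          mem_cthickening_of_dist_le x y 1 _ hmem ((mem_ball'.1 hy).le.trans hi)
        rw [image_eq_zero_of_notMem_tsupport hy', norm_zero]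
      rw [Set.indicator_of_notMem hx,
        (norm_normed_convolution_le _ hh le_rfl hzero).antisymm (norm_nonneg _), zero_mul]
  · rw [integrable_indicator_iff hK.measurableSet]
    exact (hf.integrableOn_isCompact hK).norm.const_mul C
  · exact (ContDiffBump.convolution_tendsto_right_of_continuous hb hh x).smul_const _

lemma fderiv_normed_convolution_apply (b : ContDiffBump (0 : V)) {h : V → ℝ} (hh : ContDiff ℝ 1 h)
    (hsupp : HasCompactSupport h) (x v : V) :
    fderiv ℝ (b.normed μ ⋆[lsmul ℝ ℝ, μ] h) x v =
      (b.normed μ ⋆[lsmul ℝ ℝ, μ] fun y => fderiv ℝ h y v) x := by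
  have hb : LocallyIntegrable (b.normed μ) μ := b.continuous_normed.locallyIntegrable
  rw [(hsupp.hasFDerivAt_convolution_right _ hb hh x).fderiv,
    convolution_precompR_apply _ hb (hsupp.fderiv (𝕜 := ℝ)) (hh.continuous_fderiv one_ne_zero)]

end Mollification

lemma exists_cutoff_seq (V : Type*) [NormedAddCommGroup V] [NormedSpace ℝ V]
    [FiniteDimensional ℝ V] :
    ∃ (χ : ℕ → V → ℝ) (C : ℝ), (∀ i, ContDiff ℝ 1 (χ i)) ∧ (∀ i, HasCompactSupport (χ i)) ∧
      (∀ i x, ‖χ i x‖ ≤ 1) ∧ (∀ x, Tendsto (χ · x) atTop (𝓝 1)) ∧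
      (∀ i x, ‖fderiv ℝ (χ i) x‖ ≤ C) ∧
      ∀ x, Tendsto (fun i => fderiv ℝ (χ i) x) atTop (𝓝 0) := by
  let b : ContDiffBump (0 : V) := ⟨1, 2, one_pos, one_lt_two⟩
  have hb : ContDiff ℝ 1 b := b.contDiff
  obtain ⟨C, hC⟩ := (b.hasCompactSupport.fderiv (𝕜 := ℝ)).exists_bound_of_continuous
    (hb.continuous_fderiv one_ne_zero)
  let c : ℕ → ℝ := fun i => 1 / ((i : ℝ) + 1)
  have hc : ∀ i, 0 < c i := fun i => Nat.one_div_pos_of_nat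
  have hc_lim : Tendsto c atTop (𝓝 0) := tendsto_one_div_add_atTop_nhds_zero_nat
  have hc_le : ∀ i, c i ≤ 1 := fun i => by
    rw [div_le_one (Nat.cast_add_one_pos i)]
    exact le_add_of_nonneg_left i.cast_nonneg
  have hfderiv : ∀ i x, ‖fderiv ℝ (fun y => b (c i • y)) x‖ ≤ c i * C := fun i x => by
    rw [fderiv_comp_smul, norm_smul, Real.norm_of_nonneg (hc i).le]
    exact mul_le_mul_of_nonneg_left (hC _) (hc i).le
  refine ⟨fun i x => b (c i • x), C, fun i => hb.comp (contDiff_id.const_smul (c i)),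
    fun i => b.hasCompactSupport.comp_smul (hc i).ne',
    fun i x => by rw [Real.norm_of_nonneg b.nonneg]; exact b.le_one, fun x => ?_,
    fun i x => (hfderiv i x).trans (mul_le_of_le_one_left ((norm_nonneg _).trans (hC 0)) (hc_le i)),
    fun x => squeeze_zero_norm (hfderiv · x) (by simpa only [zero_mul] using hc_lim.mul_const C)⟩
  have hb0 : b 0 = 1 := b.one_of_mem_closedBall (mem_closedBall_self zero_le_one)
  have hx : Tendsto (fun i => c i • x) atTop (𝓝 0) := by
    simpa only [zero_smul] using hc_lim.smul_const x
  exact hb0 ▸ (hb.continuous.tendsto 0).comp hx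

lemma tendsto_integral_smul_of_norm_le {X F : Type*} [MeasurableSpace X] [NormedAddCommGroup F]
    [NormedSpace ℝ F] {μ : Measure X} {a : ℕ → X → ℝ} {C r : ℝ}
    (ha : ∀ i, AEStronglyMeasurable (a i) μ) (hC : ∀ i x, ‖a i x‖ ≤ C)
    (hlim : ∀ x, Tendsto (a · x) atTop (𝓝 r)) {f : X → F} (hf : Integrable f μ) :
    Tendsto (fun i => ∫ x, a i x • f x ∂μ) atTop (𝓝 (r • ∫ x, f x ∂μ)) := by
  rw [← integral_smul]
  refine tendsto_integral_of_dominated_convergence (fun x => C * ‖f x‖) (fun i => (ha i).smul hf.1)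
    (hf.norm.const_mul C) (fun i => .of_forall fun x => ?_)
    (.of_forall fun x => (hlim x).smul_const _)
  rw [norm_smul]
  exact mul_le_mul_of_nonneg_right (hC i x) (norm_nonneg _)

lemma isWeakDeriv_one_iff {m : ℕ} {F : Type*} [NormedAddCommGroup F] [NormedSpace ℝ F]
    {s : Fin m} {f g : EuclideanSpace ℝ (Fin m) → F} :
    IsWeakDeriv 1 (fun _ => s) f g ↔ ∀ φ : EuclideanSpace ℝ (Fin m) → ℝ,
      ContDiff ℝ (⊤ : ℕ∞) φ → HasCompactSupport φ →
        ∫ x, pd s φ x • f x = -∫ x, φ x • g x := by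
  simp only [IsWeakDeriv, mpd, pd, iteratedFDeriv_one_apply, pow_one, neg_one_smul]

namespace IsWeakDeriv

variable {m : ℕ} {s : Fin m}

variable {F : Type*} [NormedAddCommGroup F] [NormedSpace ℝ F]
  {f g : EuclideanSpace ℝ (Fin m) → F} {φ : EuclideanSpace ℝ (Fin m) → ℝ}

open scoped Convolution in
open ContinuousLinearMap (lsmul) in
lemma integral_pd_smul_of_hasCompactSupport (hfg : IsWeakDeriv 1 (fun _ => s) f g)
    (hf : LocallyIntegrable f) (hg : LocallyIntegrable g) (hφ : ContDiff ℝ 1 φ)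
    (hsupp : HasCompactSupport φ) : ∫ x, pd s φ x • f x = -∫ x, φ x • g x := by
  obtain ⟨b, hb⟩ : ∃ b : ℕ → ContDiffBump (0 : EuclideanSpace ℝ (Fin m)),
      Tendsto (fun i => (b i).rOut) atTop (𝓝 0) :=
    ⟨fun i => ⟨1 / ((i : ℝ) + 1) / 2, 1 / ((i : ℝ) + 1), by positivity,
      half_lt_self Nat.one_div_pos_of_nat⟩, tendsto_one_div_add_atTop_nhds_zero_nat⟩
  have hpd : HasCompactSupport (pd s φ) := hsupp.fderiv_apply (𝕜 := ℝ) _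
  refine tendsto_nhds_unique ((tendsto_integral_normed_convolution_smul hb (continuous_pd hφ s)
    hpd hf).congr fun i => ?_)
    (tendsto_integral_normed_convolution_smul hb hφ.continuous hsupp hg).neg
  have hsmooth : ContDiff ℝ (⊤ : ℕ∞) ((b i).normed volume ⋆[lsmul ℝ ℝ, volume] φ) :=
    (b i).hasCompactSupport_normed.contDiff_convolution_left _ (b i).contDiff_normed
      hφ.continuous.locallyIntegrable
  rw [← isWeakDeriv_one_iff.1 hfg _ hsmooth ((b i).hasCompactSupport_normed.convolution _ hsupp)]
  refine integral_congr_ae (.of_forall fun x => congrArg (· • f x) ?_)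
  exact (fderiv_normed_convolution_apply (b i) hφ hsupp x _).symm

lemma integral_pd_smul (hfg : IsWeakDeriv 1 (fun _ => s) f g)
    (hf : LocallyIntegrable f) (hg : LocallyIntegrable g) (hφ : ContDiff ℝ 1 φ)
    (hφf : Integrable fun x => φ x • f x) (hφg : Integrable fun x => φ x • g x)
    (hpdf : Integrable fun x => pd s φ x • f x) : ∫ x, pd s φ x • f x = -∫ x, φ x • g x := by
  obtain ⟨χ, C, hχ, hχsupp, hχ_le, hχ_lim, hχ'_le, hχ'_lim⟩ :=
    exists_cutoff_seq (EuclideanSpace ℝ (Fin m))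
  have hpd_le : ∀ i x, ‖pd s (χ i) x‖ ≤ C := fun i x =>
    (norm_pd_le_norm_fderiv s x).trans (hχ'_le i x)
  have hpd_lim : ∀ x, Tendsto (fun i => pd s (χ i) x) atTop (𝓝 0) := fun x =>
    squeeze_zero_norm (fun i => norm_pd_le_norm_fderiv s x)
      (tendsto_zero_iff_norm_tendsto_zero.1 (hχ'_lim x))
  have hχm : ∀ i, AEStronglyMeasurable (χ i) := fun i => (hχ i).continuous.aestronglyMeasurable
  have hpdm : ∀ i, AEStronglyMeasurable (pd s (χ i)) := fun i =>
    (continuous_pd (hχ i) s).aestronglyMeasurable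
  have hleft := (tendsto_integral_smul_of_norm_le hχm hχ_le hχ_lim hpdf).add
    (tendsto_integral_smul_of_norm_le hpdm hpd_le hpd_lim hφf)
  have hright := (tendsto_integral_smul_of_norm_le hχm hχ_le hχ_lim hφg).neg
  rw [one_smul, zero_smul, add_zero] at hleft
  rw [one_smul] at hright
  refine tendsto_nhds_unique (hleft.congr fun i => ?_) hright
  have hcut := hfg.integral_pd_smul_of_hasCompactSupport hf hg ((hχ i).smul hφ)
    (hχsupp i).smul_right
  simp only [Pi.smul_def', smul_assoc] at hcut
  have hχpdf : Integrable fun x => χ i x • pd s φ x • f x :=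
    hpdf.bdd_smul _ (hχm i) (.of_forall (hχ_le i))
  have hpdχf : Integrable fun x => pd s (χ i) x • φ x • f x :=
    hφf.bdd_smul _ (hpdm i) (.of_forall (hpd_le i))
  rw [← hcut, ← integral_add hχpdf hpdχf]
  refine integral_congr_ae (.of_forall fun x => ?_)
  simp only [pd_smul ((hχ i).differentiable one_ne_zero x) (hφ.differentiable one_ne_zero x) s,
    add_smul, smul_assoc]

end IsWeakDeriv

section Complex

variable {X F : Type*} [MeasurableSpace X] [NormedAddCommGroup F] [NormedSpace ℂ F]
  {μ : Measure X} {h : X → ℂ} {f : X → F}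

lemma integrable_clm_smul (L : ℂ →L[ℝ] ℝ) (hL : ‖L‖ ≤ 1) (hh : AEStronglyMeasurable h μ)
    (hf : AEStronglyMeasurable f μ) (hhf : Integrable (fun x => h x • f x) μ) :
    Integrable (fun x => L (h x) • f x) μ := by
  refine hhf.mono ((L.continuous.comp_aestronglyMeasurable hh).smul hf) (.of_forall fun x => ?_)
  simp only [norm_smul]
  gcongr
  exact L.le_of_opNorm_le_of_le hL le_rfl |>.trans_eq (one_mul _)

lemma integral_complex_smul (hh : AEStronglyMeasurable h μ) (hf : AEStronglyMeasurable f μ)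
    (hhf : Integrable (fun x => h x • f x) μ) :
    ∫ x, h x • f x ∂μ = (∫ x, (h x).re • f x ∂μ) + Complex.I • ∫ x, (h x).im • f x ∂μ := by
  have hre := integrable_clm_smul Complex.reCLM Complex.reCLM_norm.le hh hf hhf
  have him : Integrable (fun x => Complex.I • (h x).im • f x) μ :=
    (integrable_clm_smul Complex.imCLM Complex.imCLM_norm.le hh hf hhf).smul Complex.I
  simp only [Complex.reCLM_apply] at hre
  rw [← integral_smul, ← integral_add hre him]
  refine integral_congr_ae (.of_forall fun x => ?_)
  simp only [← Complex.coe_smul, smul_smul, ← add_smul]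
  rw [mul_comm Complex.I, Complex.re_add_im]

end Complex

lemma IsWeakDeriv.integral_pd_complex_smul {m : ℕ} {s : Fin m} {F : Type*}
    [NormedAddCommGroup F] [NormedSpace ℂ F] {f g : EuclideanSpace ℝ (Fin m) → F}
    {φ : EuclideanSpace ℝ (Fin m) → ℂ} (hfg : IsWeakDeriv 1 (fun _ => s) f g)
    (hf : LocallyIntegrable f) (hg : LocallyIntegrable g) (hφ : ContDiff ℝ 1 φ)
    (hφf : Integrable fun x => φ x • f x) (hφg : Integrable fun x => φ x • g x)
    (hpdf : Integrable fun x => pd s φ x • f x) : ∫ x, pd s φ x • f x = -∫ x, φ x • g x := by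
  have hφm : AEStronglyMeasurable φ := hφ.continuous.aestronglyMeasurable
  have hpdm : AEStronglyMeasurable (pd s φ) := (continuous_pd hφ s).aestronglyMeasurable
  have hfm := hf.aestronglyMeasurable
  have hgm := hg.aestronglyMeasurable
  have hcomponent : ∀ L : ℂ →L[ℝ] ℝ, ‖L‖ ≤ 1 →
      ∫ x, L (pd s φ x) • f x = -∫ x, L (φ x) • g x := fun L hL => by
    have hpd : ∀ x, pd s (fun y => L (φ y)) x = L (pd s φ x) := fun x =>
      pd_clm_comp L (hφ.differentiable one_ne_zero x) s
    simp only [← hpd]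
    refine hfg.integral_pd_smul hf hg (L.contDiff.comp hφ)
      (integrable_clm_smul L hL hφm hfm hφf) (integrable_clm_smul L hL hφm hgm hφg) ?_
    simpa only [hpd] using integrable_clm_smul L hL hpdm hfm hpdf
  have hre := hcomponent Complex.reCLM Complex.reCLM_norm.le
  have him := hcomponent Complex.imCLM Complex.imCLM_norm.le
  simp only [Complex.reCLM_apply, Complex.imCLM_apply] at hre him
  rw [integral_complex_smul hpdm hfm hpdf, integral_complex_smul hφm hgm hφg, hre, him,
    smul_neg, neg_add]

/-- `h` is positively homogeneous of degree `d` away from the origin. The degree is an integer, and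
the value `h 0` is left free. -/
def PosHomogeneous {V F : Type*} [NormedAddCommGroup V] [NormedSpace ℝ V] [NormedAddCommGroup F]
    [NormedSpace ℝ F] (d : ℤ) (h : V → F) : Prop :=
  ∀ l : ℝ, 0 < l → ∀ x, x ≠ 0 → h (l • x) = l ^ d • h x

namespace PosHomogeneous

variable {V F : Type*} [NormedAddCommGroup V] [NormedSpace ℝ V] [NormedAddCommGroup F]
  [NormedSpace ℝ F] {d : ℤ} {h : V → F}

lemma complex_iff {h : V → ℂ} :
    PosHomogeneous d h ↔ ∀ l : ℝ, 0 < l → ∀ x, x ≠ 0 → h (l • x) = (l : ℂ) ^ d * h x := by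
  simp only [PosHomogeneous, Complex.real_smul, Complex.ofReal_zpow]

lemma fderiv (hh : PosHomogeneous d h) : PosHomogeneous (d - 1) (fderiv ℝ h) := by
  intro l hl x hx
  have hscale : (fun y => h (l • y)) =ᶠ[𝓝 x] fun y => l ^ d • h y := by
    filter_upwards [isOpen_ne.mem_nhds hx] with y hy using hh l hl y hy
  have hderiv : l • _root_.fderiv ℝ h (l • x) = l ^ d • _root_.fderiv ℝ h x := by
    rw [← fderiv_comp_smul, hscale.fderiv_eq]
    exact congrFun (fderiv_const_smul_field (l ^ d)) x
  rw [zpow_sub_one₀ hl.ne', mul_comm, mul_smul, ← hderiv, inv_smul_smul₀ hl.ne']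

lemma fderiv_apply_self (hh : PosHomogeneous d h) {x : V} (hx : x ≠ 0)
    (hd : DifferentiableAt ℝ h x) : _root_.fderiv ℝ h x x = (d : ℝ) • h x := by
  have hray : HasDerivAt (fun l : ℝ => h (l • x)) (_root_.fderiv ℝ h x x) 1 := by
    have hsmul : HasDerivAt (fun l : ℝ => l • x) x 1 := by
      simpa only [one_smul, id_eq] using (hasDerivAt_id (1 : ℝ)).smul_const x
    exact HasFDerivAt.comp_hasDerivAt_of_eq 1 hd.hasFDerivAt hsmul (one_smul ℝ x).symm
  have hpow : HasDerivAt (fun l : ℝ => l ^ d • h x) ((d : ℝ) • h x) 1 := by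
    simpa only [one_zpow, mul_one] using
      (hasDerivAt_zpow d (1 : ℝ) (.inl one_ne_zero)).smul_const (h x)
  refine hray.unique (hpow.congr_of_eventuallyEq ?_)
  filter_upwards [lt_mem_nhds one_pos] with l hl using hh l hl x hx

lemma exists_norm_le [FiniteDimensional ℝ V] (hh : PosHomogeneous d h)
    (hc : ContinuousOn h {0}ᶜ) : ∃ C, 0 ≤ C ∧ ∀ x, x ≠ 0 → ‖h x‖ ≤ C * ‖x‖ ^ d := by
  have := FiniteDimensional.proper_real V
  obtain ⟨C, hC⟩ := (isCompact_sphere (0 : V) 1).exists_bound_of_continuousOn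
    (hc.mono fun x hx => ne_zero_of_mem_unit_sphere ⟨x, hx⟩)
  refine ⟨max C 0, le_max_right _ _, fun x hx => ?_⟩
  have hnorm := norm_pos_iff.2 hx
  have hunit : ‖x‖⁻¹ • x ∈ sphere (0 : V) 1 := by
    rw [mem_sphere_zero_iff_norm, norm_smul, norm_inv, norm_norm, inv_mul_cancel₀ hnorm.ne']
  have hscale := hh ‖x‖ hnorm _ (ne_zero_of_mem_unit_sphere ⟨_, hunit⟩)
  rw [smul_inv_smul₀ hnorm.ne'] at hscale
  rw [hscale, norm_smul, norm_zpow, norm_norm, mul_comm]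
  gcongr
  exact (hC _ hunit).trans (le_max_left _ _)

variable {n : ℕ} {u : EuclideanSpace ℝ (Fin n) → F}

protected lemma pd (hu : PosHomogeneous d u) (j : Fin n) :
    PosHomogeneous (d - 1) (pd j u) := fun l hl x hx => by
  simp only [_root_.pd, hu.fderiv l hl x hx, smul_apply]

lemma coord_smul (hu : PosHomogeneous d u) (j : Fin n) :
    PosHomogeneous (d + 1) (fun x => x j • u x) := fun l hl x hx => by
  simp only [hu l hl x hx, PiLp.smul_apply, smul_smul, zpow_add_one₀ hl.ne', smul_eq_mul]
  congr 1
  ring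

end PosHomogeneous

section CoordSmul

variable {n : ℕ} {F : Type*} [NormedAddCommGroup F] [NormedSpace ℝ F]
  {u : EuclideanSpace ℝ (Fin n) → F}

lemma PosHomogeneous.sum_pd_coord_smul {d : ℤ} (hu : PosHomogeneous d u)
    {x : EuclideanSpace ℝ (Fin n)} (hx : x ≠ 0) (hd : DifferentiableAt ℝ u x) :
    ∑ s, pd s (fun y => y s • u y) x = ((n : ℝ) + d) • u x := by
  have hcoord : ∀ s : Fin n, HasFDerivAt (fun y : EuclideanSpace ℝ (Fin n) => y s)
      (EuclideanSpace.proj s : EuclideanSpace ℝ (Fin n) →L[ℝ] ℝ) x := fun s =>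
    (EuclideanSpace.proj s : EuclideanSpace ℝ (Fin n) →L[ℝ] ℝ).hasFDerivAt
  have hpd : ∀ s, pd s (fun y => y s) x = 1 := fun s => by rw [pd, (hcoord s).fderiv]; simp
  simp only [pd_smul (hcoord _).differentiableAt hd, hpd, Finset.sum_add_distrib, one_smul,
    sum_smul_pd, hu.fderiv_apply_self hx hd, Finset.sum_const, Finset.card_univ, Fintype.card_fin]
  rw [add_smul, add_comm, Nat.cast_smul_eq_nsmul]

lemma contDiffOn_of_coord_smul {m : WithTop ℕ∞}
    (h : ∀ s, ContDiffOn ℝ m (fun x => x s • u x) {0}ᶜ) : ContDiffOn ℝ m u {0}ᶜ := by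
  have hcoord : ∀ s : Fin n, ContDiffOn ℝ m (fun x : EuclideanSpace ℝ (Fin n) => x s) {0}ᶜ :=
    fun s => (contDiff_piLp_apply _).contDiffOn
  have hnormsq : ContDiffOn ℝ m (fun x : EuclideanSpace ℝ (Fin n) => (‖x‖ ^ 2)⁻¹) {0}ᶜ :=
    (contDiff_norm_sq ℝ).contDiffOn.inv fun x hx => pow_ne_zero 2 (norm_ne_zero_iff.2 hx)
  have hcontract : ContDiffOn ℝ m (fun x => (‖x‖ ^ 2)⁻¹ • ∑ s, x s • x s • u x) {0}ᶜ :=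
    hnormsq.smul (.sum fun s _ => (hcoord s).smul (h s))
  refine hcontract.congr fun x hx => ?_
  simp only [smul_smul, ← Finset.sum_smul, ← sq, ← EuclideanSpace.real_norm_sq_eq]
  rw [inv_mul_cancel₀ (pow_ne_zero 2 (norm_ne_zero_iff.2 hx)), one_smul]

end CoordSmul

section UpperHalfSpace

variable {n : ℕ}

lemma sum_finUp_add_lastIdx {F : Type*} [AddCommMonoid F] (hn : 0 < n) (h : Fin n → F) :
    ∑ s, h s = ∑ s, h (finUp s) + h (lastIdx n hn) := by
  obtain ⟨m, rfl⟩ := Nat.exists_eq_add_one_of_ne_zero hn.ne'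
  exact Fin.sum_univ_castSucc h

@[simp]
lemma toUp_finUp (z : EuclideanSpace ℝ (Fin (n - 1))) (t : ℝ) (s : Fin (n - 1)) :
    toUp z t (finUp s) = z s := by
  simp [toUp, finUp]

@[simp]
lemma toUp_lastIdx (hn : 0 < n) (z : EuclideanSpace ℝ (Fin (n - 1))) (t : ℝ) :
    toUp z t (lastIdx n hn) = t := by
  simp [toUp, lastIdx]

/-- The parametrization `(x', t) ↦ toUp x' t` of `ℝⁿ` as a continuous linear map. -/
def toUpCLM (n : ℕ) : EuclideanSpace ℝ (Fin (n - 1)) × ℝ →L[ℝ] EuclideanSpace ℝ (Fin n) :=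
  LinearMap.toContinuousLinearMap
    { toFun := fun p => toUp p.1 p.2
      map_add' := fun p q => by
        ext i
        simp only [toUp, WithLp.equiv_symm_apply, Prod.fst_add, Prod.snd_add, PiLp.add_apply]
        split_ifs <;> rfl
      map_smul' := fun c p => by
        ext i
        simp only [toUp, WithLp.equiv_symm_apply, Prod.smul_fst, Prod.smul_snd, PiLp.smul_apply]
        split_ifs <;> rfl }

lemma toUpCLM_apply (z : EuclideanSpace ℝ (Fin (n - 1))) (t : ℝ) :
    toUpCLM n (z, t) = toUp z t := rfl

lemma toUpCLM_single (s : Fin (n - 1)) :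
    toUpCLM n (EuclideanSpace.single s 1, 0) = EuclideanSpace.single (finUp s) 1 := by
  ext i
  simp only [toUpCLM_apply, toUp, WithLp.equiv_symm_apply, finUp, PiLp.single_apply,
    Fin.ext_iff]
  split_ifs <;> first | rfl | omega

lemma toUpCLM_zero_one (hn : 0 < n) :
    toUpCLM n (0, 1) = EuclideanSpace.single (lastIdx n hn) 1 := by
  ext i
  simp only [toUpCLM_apply, toUp, WithLp.equiv_symm_apply, lastIdx, PiLp.single_apply,
    Fin.ext_iff, PiLp.zero_apply]
  split_ifs <;> first | rfl | omega

lemma smul_toUp (c : ℝ) (z : EuclideanSpace ℝ (Fin (n - 1))) (t : ℝ) :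
    c • (toUp z t : EuclideanSpace ℝ (Fin n)) = toUp (c • z) (c * t) :=
  ((toUpCLM n).map_smul c (z, t)).symm

lemma norm_toUp_sq (hn : 0 < n) (z : EuclideanSpace ℝ (Fin (n - 1))) (t : ℝ) :
    ‖(toUp z t : EuclideanSpace ℝ (Fin n))‖ ^ 2 = ‖z‖ ^ 2 + t ^ 2 := by
  simp only [EuclideanSpace.real_norm_sq_eq, sum_finUp_add_lastIdx hn, toUp_finUp, toUp_lastIdx]

lemma norm_le_norm_toUp (hn : 0 < n) (z : EuclideanSpace ℝ (Fin (n - 1))) (t : ℝ) :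
    ‖z‖ ≤ ‖(toUp z t : EuclideanSpace ℝ (Fin n))‖ :=
  le_of_sq_le_sq (by rw [norm_toUp_sq hn]; linarith [sq_nonneg t]) (norm_nonneg _)

lemma le_norm_toUp (hn : 0 < n) (z : EuclideanSpace ℝ (Fin (n - 1))) (t : ℝ) :
    t ≤ ‖(toUp z t : EuclideanSpace ℝ (Fin n))‖ :=
  le_of_sq_le_sq (by rw [norm_toUp_sq hn]; linarith [sq_nonneg ‖z‖]) (norm_nonneg _)

lemma toUp_ne_zero (hn : 0 < n) (z : EuclideanSpace ℝ (Fin (n - 1))) {t : ℝ} (ht : 0 < t) :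
    (toUp z t : EuclideanSpace ℝ (Fin n)) ≠ 0 :=
  norm_pos_iff.1 (ht.trans_le (le_norm_toUp hn z t))

lemma one_add_norm_le_mul_norm_toUp (hn : 0 < n) (x y : EuclideanSpace ℝ (Fin (n - 1)))
    {t₀ t : ℝ} (ht₀ : 0 < t₀) (ht : t₀ ≤ t) :
    1 + ‖y‖ ≤ ((1 + ‖x‖) / t₀ + 1) * ‖(toUp (x - y) t : EuclideanSpace ℝ (Fin n))‖ := by
  have hheight : 1 + ‖x‖ ≤ (1 + ‖x‖) / t₀ * ‖(toUp (x - y) t : EuclideanSpace ℝ (Fin n))‖ := by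
    rw [div_mul_eq_mul_div, le_div_iff₀ ht₀]
    gcongr
    exact ht.trans (le_norm_toUp hn _ _)
  have hdist := norm_le_norm_toUp hn (x - y) t
  have htriangle := norm_sub_norm_le y x
  rw [norm_sub_rev] at htriangle
  linarith

variable {F : Type*} [NormedAddCommGroup F] [NormedSpace ℝ F] {u : EuclideanSpace ℝ (Fin n) → F}

lemma hasDerivAt_comp_toUp (hn : 0 < n) {z : EuclideanSpace ℝ (Fin (n - 1))} {t : ℝ}
    (hu : DifferentiableAt ℝ u (toUp z t)) :
    HasDerivAt (fun τ => u (toUp z τ)) (pd (lastIdx n hn) u (toUp z t)) t := by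
  rw [pd, ← toUpCLM_zero_one hn]
  exact hu.hasFDerivAt.comp_hasDerivAt t ((toUpCLM n).hasFDerivAt.comp_hasDerivAt t
    ((hasDerivAt_const t z).prodMk (hasDerivAt_id t)))

lemma pd_comp_toUp_sub {x y : EuclideanSpace ℝ (Fin (n - 1))} {t : ℝ}
    (hu : DifferentiableAt ℝ u (toUp (x - y) t)) (s : Fin (n - 1)) :
    pd s (fun y => u (toUp (x - y) t)) y = -pd (finUp s) u (toUp (x - y) t) := by
  have h : HasFDerivAt (fun y => u (toUp (x - y) t)) _ y := hu.hasFDerivAt.comp y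
    ((toUpCLM n).hasFDerivAt.comp y
      (((hasFDerivAt_id y).const_sub x).prodMk (hasFDerivAt_const t y)))
  rw [pd, h.fderiv, pd, ← toUpCLM_single, ← map_neg, ← map_neg]
  simp

lemma contDiff_comp_toUp_sub (hn : 0 < n) {m : WithTop ℕ∞} (hu : ContDiffOn ℝ m u {0}ᶜ)
    (x : EuclideanSpace ℝ (Fin (n - 1))) {t : ℝ} (ht : 0 < t) :
    ContDiff ℝ m fun y => u (toUp (x - y) t) :=
  hu.comp_contDiff ((toUpCLM n).contDiff.comp ((contDiff_const.sub contDiff_id).prodMk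
    contDiff_const)) fun _ => toUp_ne_zero hn _ ht

lemma continuous_comp_toUp_sub (hn : 0 < n) (hu : ContinuousOn u {0}ᶜ)
    (x : EuclideanSpace ℝ (Fin (n - 1))) {t : ℝ} (ht : 0 < t) :
    Continuous fun y => u (toUp (x - y) t) :=
  contDiff_zero.1 (contDiff_comp_toUp_sub hn (contDiffOn_zero.2 hu) x ht)

namespace PosHomogeneous

variable {d : ℤ}

lemma zpow_smul_comp_toUp (hn : 0 < n) (hu : PosHomogeneous d u)
    (z : EuclideanSpace ℝ (Fin (n - 1))) {t : ℝ} (ht : 0 < t) :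
    t ^ d • u (toUp (t⁻¹ • z) 1) = u (toUp z t) := by
  rw [← hu t ht _ (toUp_ne_zero hn _ one_pos), smul_toUp, smul_inv_smul₀ ht.ne', mul_one]

lemma exists_norm_comp_toUp_sub_le (hn : 0 < n) (hu : PosHomogeneous d u)
    (hc : ContinuousOn u {0}ᶜ) (hd : d ≤ 0) (x : EuclideanSpace ℝ (Fin (n - 1))) {t₀ : ℝ}
    (ht₀ : 0 < t₀) : ∃ C, ∀ t, t₀ ≤ t → ∀ y, ‖u (toUp (x - y) t)‖ ≤ C * (1 + ‖y‖) ^ d := by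
  obtain ⟨m, rfl⟩ := Int.exists_eq_neg_ofNat hd
  obtain ⟨C, hC, hu_le⟩ := hu.exists_norm_le hc
  set K := (1 + ‖x‖) / t₀ + 1
  refine ⟨C * K ^ m, fun t ht y => (hu_le _ (toUp_ne_zero hn _ (ht₀.trans_le ht))).trans ?_⟩
  have hnorm := ht₀.trans_le (ht.trans (le_norm_toUp hn (x - y) t))
  rw [zpow_neg, zpow_natCast, zpow_neg, zpow_natCast, mul_assoc]
  gcongr
  rw [inv_le_comm₀ (by positivity) (by positivity), mul_inv, inv_inv, ← div_eq_inv_mul,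
    div_le_iff₀ (by positivity), mul_comm, ← mul_pow]
  gcongr
  exact one_add_norm_le_mul_norm_toUp hn x y ht₀ ht

end PosHomogeneous

end UpperHalfSpace

section Weights

variable {V F : Type*} [NormedAddCommGroup V] [MeasurableSpace V] [BorelSpace V]
  [NormedAddCommGroup F] [NormedSpace ℝ F] {μ : Measure V} {d e : ℤ} {f : V → F}

lemma continuous_one_add_norm_zpow (V : Type*) [NormedAddCommGroup V] (d : ℤ) :
    Continuous fun y : V => (1 + ‖y‖) ^ d :=
  (continuous_const.add continuous_norm).zpow₀ d fun y =>
    .inl (add_pos_of_pos_of_nonneg one_pos (norm_nonneg y)).ne'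

lemma locallyIntegrable_of_integrable_one_add_norm_zpow_smul [LocallyCompactSpace V]
    (hf : Integrable (fun y => (1 + ‖y‖) ^ d • f y) μ) : LocallyIntegrable f μ := by
  have hne : ∀ y : V, (1 + ‖y‖) ^ d ≠ 0 := fun y => by positivity
  have hunweighted := hf.locallyIntegrable.continuous_smul (continuous_one_add_norm_zpow V (-d))
  simpa only [zpow_neg, inv_smul_smul₀ (hne _)] using hunweighted

lemma integrable_one_add_norm_zpow_smul_mono [SecondCountableTopologyEither V ℝ] (hed : e ≤ d)
    (hf : Integrable (fun y => (1 + ‖y‖) ^ d • f y) μ) :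
    Integrable (fun y => (1 + ‖y‖) ^ e • f y) μ := by
  have hne : ∀ y : V, 1 + ‖y‖ ≠ 0 := fun y => by positivity
  have hbound : ∀ y : V, ‖(1 + ‖y‖) ^ (e - d)‖ ≤ 1 := fun y => by
    rw [Real.norm_of_nonneg (by positivity)]
    exact zpow_le_one_of_nonpos₀ (le_add_of_nonneg_right (norm_nonneg y)) (sub_nonpos.2 hed)
  have hproduct := hf.bdd_smul 1 (continuous_one_add_norm_zpow V (e - d)).aestronglyMeasurable
    (.of_forall hbound)
  refine hproduct.congr (.of_forall fun y => ?_)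
  simp only [Pi.smul_apply', smul_smul, ← zpow_add₀ (hne y), sub_add_cancel]

open Module in
lemma integrable_one_add_norm_zpow_smul_of_memLp [NormedSpace ℝ V] [FiniteDimensional ℝ V]
    [μ.IsAddHaarMeasure] {p : ℝ≥0∞} (hp : 1 ≤ p) (hp_top : p ≠ ∞) (hV : 0 < finrank ℝ V)
    (hf : MemLp f p μ) : Integrable (fun y => (1 + ‖y‖) ^ (-(finrank ℝ V : ℤ)) • f y) μ := by
  have hpq : p.HolderConjugate p.conjExponent := .conjExponent hp
  have hcont := continuous_one_add_norm_zpow V (-(finrank ℝ V : ℤ))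
  have hweight : MemLp (fun y : V => (1 + ‖y‖) ^ (-(finrank ℝ V : ℤ))) p.conjExponent μ := by
    obtain hq_top | hq_top := eq_or_ne p.conjExponent ∞
    · rw [hq_top]
      refine memLp_top_of_bound hcont.aestronglyMeasurable 1 (.of_forall fun y => ?_)
      rw [Real.norm_of_nonneg (by positivity)]
      exact zpow_le_one_of_nonpos₀ (le_add_of_nonneg_right (norm_nonneg y)) (by simp)
    · have hq : 1 < p.conjExponent.toReal := (ENNReal.ofReal_lt_iff_lt_toReal zero_le_one
        hq_top).1 (ENNReal.ofReal_one.trans_lt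
          ((ENNReal.HolderConjugate.lt_top_iff_one_lt _ _).1 hp_top.lt_top))
      rw [← integrable_norm_rpow_iff hcont.aestronglyMeasurable
        (ENNReal.HolderConjugate.ne_zero p.conjExponent p) hq_top]
      refine (integrable_one_add_norm (r := finrank ℝ V * p.conjExponent.toReal)
        (lt_mul_of_one_lt_right (Nat.cast_pos.2 hV) hq)).congr (.of_forall fun y => ?_)
      have hy : 0 ≤ 1 + ‖y‖ := by positivity
      beta_reduce
      rw [Real.norm_of_nonneg (zpow_nonneg hy _), ← Real.rpow_intCast, ← Real.rpow_mul hy]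
      push_cast
      rw [neg_mul]
  exact memLp_one_iff_integrable.1 (hf.smul hweight)

lemma integrable_one_add_norm_zpow_smul_of_memLp_euclideanSpace {n : ℕ}
    (hn : 2 ≤ n) {p : ℝ} (hp : 1 ≤ p) {f : EuclideanSpace ℝ (Fin (n - 1)) → F}
    (hf : MemLp f (ENNReal.ofReal p) volume) :
    Integrable fun y => (1 + ‖y‖) ^ (1 - n : ℤ) • f y := by
  have hfinrank : (1 - n : ℤ) = -(Module.finrank ℝ (EuclideanSpace ℝ (Fin (n - 1)))) := by
    rw [finrank_euclideanSpace_fin]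
    omega
  rw [hfinrank]
  exact integrable_one_add_norm_zpow_smul_of_memLp (ENNReal.one_le_ofReal.2 hp)
    ENNReal.ofReal_ne_top (by rw [finrank_euclideanSpace_fin]; omega) hf

end Weights

/-- The integral `∫ G(x - y, t) f(y) dy`: convolution of `f` with the slice of `G` at height `t`.
For `G` homogeneous of degree `1 - n` this is the convolution with the dilate `(G(·, 1))_t`. -/
def sliceConv {n : ℕ} (G : EuclideanSpace ℝ (Fin n) → ℂ) (f : EuclideanSpace ℝ (Fin (n - 1)) → ℂ)
    (t : ℝ) (x : EuclideanSpace ℝ (Fin (n - 1))) : ℂ :=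
  ∫ y, G (toUp (x - y) t) * f y

section SliceConv

variable {n : ℕ} (hn : 0 < n) {d : ℤ} {G : EuclideanSpace ℝ (Fin n) → ℂ}
  {f g : EuclideanSpace ℝ (Fin (n - 1)) → ℂ}

include hn

lemma integrable_sliceConv (hG : PosHomogeneous d G) (hc : ContinuousOn G {0}ᶜ) (hd : d ≤ 0)
    (hf : Integrable fun y => (1 + ‖y‖) ^ d • f y) {t : ℝ} (ht : 0 < t)
    (x : EuclideanSpace ℝ (Fin (n - 1))) : Integrable fun y => G (toUp (x - y) t) * f y := by
  obtain ⟨C, hC⟩ := hG.exists_norm_comp_toUp_sub_le hn hc hd x ht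
  have hfm := (locallyIntegrable_of_integrable_one_add_norm_zpow_smul hf).aestronglyMeasurable
  refine (hf.norm.const_mul C).mono' ((continuous_comp_toUp_sub hn hc x
    ht).aestronglyMeasurable.mul hfm) (.of_forall fun y => ?_)
  rw [norm_mul, norm_smul, Real.norm_of_nonneg (by positivity), ← mul_assoc]
  gcongr
  exact hC t le_rfl y

lemma sliceConv_congr {H : EuclideanSpace ℝ (Fin n) → ℂ} (h : ∀ z, z ≠ 0 → G z = H z) {t : ℝ}
    (ht : 0 < t) {x : EuclideanSpace ℝ (Fin (n - 1))} : sliceConv G f t x = sliceConv H f t x := by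
  simp only [sliceConv, h _ (toUp_ne_zero hn _ ht)]

omit hn in
lemma sliceConv_sum {ι : Type*} [Fintype ι] {G : ι → EuclideanSpace ℝ (Fin n) → ℂ} (c : ι → ℂ)
    {t : ℝ} {x : EuclideanSpace ℝ (Fin (n - 1))}
    (h : ∀ i, Integrable fun y => G i (toUp (x - y) t) * f y) :
    sliceConv (fun z => ∑ i, c i * G i z) f t x = ∑ i, c i * sliceConv (G i) f t x := by
  simp only [sliceConv, Finset.sum_mul, mul_assoc]
  rw [integral_finsetSum _ fun i _ => (h i).const_mul (c i)]
  simp only [integral_const_mul]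

lemma integrable_sliceConv_pd (hG : PosHomogeneous d G) (hG1 : ContDiffOn ℝ 1 G {0}ᶜ) (hd : d ≤ 0)
    (hf : Integrable fun y => (1 + ‖y‖) ^ d • f y) {t : ℝ} (ht : 0 < t)
    (x : EuclideanSpace ℝ (Fin (n - 1))) (j : Fin n) :
    Integrable fun y => pd j G (toUp (x - y) t) * f y :=
  integrable_sliceConv hn (hG.pd j) (continuousOn_pd hG1 isOpen_compl_singleton j)
    (sub_nonpos.2 (hd.trans zero_le_one))
    (integrable_one_add_norm_zpow_smul_mono (sub_le_self d zero_le_one) hf) ht x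

lemma hasDerivAt_sliceConv (hG : PosHomogeneous d G) (hG1 : ContDiffOn ℝ 1 G {0}ᶜ) (hd : d ≤ 0)
    (hf : Integrable fun y => (1 + ‖y‖) ^ d • f y) {t : ℝ} (ht : 0 < t)
    (x : EuclideanSpace ℝ (Fin (n - 1))) :
    HasDerivAt (fun τ => sliceConv G f τ x) (sliceConv (pd (lastIdx n hn) G) f t x) t := by
  have hfm := (locallyIntegrable_of_integrable_one_add_norm_zpow_smul hf).aestronglyMeasurable
  have hpdc : ContinuousOn (pd (lastIdx n hn) G) {0}ᶜ :=
    continuousOn_pd hG1 isOpen_compl_singleton _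
  have ht₀ : 0 < t / 2 := half_pos ht
  obtain ⟨C, hC⟩ := (hG.pd (lastIdx n hn)).exists_norm_comp_toUp_sub_le hn hpdc
    (sub_nonpos.2 (hd.trans zero_le_one)) x ht₀
  refine (hasDerivAt_integral_of_dominated_loc_of_deriv_le (Ioi_mem_nhds (half_lt_self ht))
    (F' := fun τ y => pd (lastIdx n hn) G (toUp (x - y) τ) * f y)
    (bound := fun y => C * ‖(1 + ‖y‖) ^ (d - 1) • f y‖) ?_
    (integrable_sliceConv hn hG hG1.continuousOn hd hf ht x)
    ((continuous_comp_toUp_sub hn hpdc x ht).aestronglyMeasurable.mul hfm)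
    (.of_forall fun y τ hτ => ?_)
    ((integrable_one_add_norm_zpow_smul_mono (sub_le_self d zero_le_one) hf).norm.const_mul C)
    (.of_forall fun y τ hτ => ?_)).2
  · filter_upwards [lt_mem_nhds ht] with τ hτ
    exact (continuous_comp_toUp_sub hn hG1.continuousOn x hτ).aestronglyMeasurable.mul hfm
  · rw [norm_mul, norm_smul, Real.norm_of_nonneg (by positivity), ← mul_assoc]
    gcongr
    exact hC τ (Set.mem_Ioi.1 hτ).le y
  · have hne := toUp_ne_zero hn (x - y) (ht₀.trans hτ)
    exact (hasDerivAt_comp_toUp hn ((hG1.differentiableOn one_ne_zero).differentiableAt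
      (isOpen_ne.mem_nhds hne))).mul_const (f y)

lemma IsWeakDeriv.sliceConv_eq {s : Fin (n - 1)} (hfg : IsWeakDeriv 1 (fun _ => s) f g)
    (hG : PosHomogeneous d G) (hG1 : ContDiffOn ℝ 1 G {0}ᶜ) (hd : d ≤ 0)
    (hf : Integrable fun y => (1 + ‖y‖) ^ d • f y) (hg : Integrable fun y => (1 + ‖y‖) ^ d • g y)
    {t : ℝ} (ht : 0 < t) (x : EuclideanSpace ℝ (Fin (n - 1))) :
    sliceConv G g t x = sliceConv (pd (finUp s) G) f t x := by
  have hf_loc := locallyIntegrable_of_integrable_one_add_norm_zpow_smul hf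
  have hpd : ∀ y, pd s (fun y => G (toUp (x - y) t)) y = -pd (finUp s) G (toUp (x - y) t) :=
    fun y => pd_comp_toUp_sub ((hG1.differentiableOn one_ne_zero).differentiableAt
      (isOpen_ne.mem_nhds (toUp_ne_zero hn (x - y) ht))) s
  have hparts := hfg.integral_pd_complex_smul hf_loc
    (locallyIntegrable_of_integrable_one_add_norm_zpow_smul hg)
    (contDiff_comp_toUp_sub hn hG1 x ht)
    (integrable_sliceConv hn hG hG1.continuousOn hd hf ht x)
    (integrable_sliceConv hn hG hG1.continuousOn hd hg ht x)
    (by simpa only [hpd, neg_mul, smul_eq_mul] using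
      (integrable_sliceConv_pd hn hG hG1 hd hf ht x (finUp s)).fun_neg)
  simp only [hpd, smul_eq_mul, neg_mul, integral_neg, neg_inj] at hparts
  exact hparts.symm

lemma hasDerivAt_sliceConv_pd_finUp {u : EuclideanSpace ℝ (Fin n) → ℂ} {r : Fin (n - 1)}
    (hu : ContDiffOn ℝ 2 u {0}ᶜ) (hur : PosHomogeneous d (pd (finUp r) u))
    (hul : PosHomogeneous d (pd (lastIdx n hn) u)) (hd : d ≤ 0)
    (hfg : IsWeakDeriv 1 (fun _ => r) f g) (hf : Integrable fun y => (1 + ‖y‖) ^ d • f y)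
    (hg : Integrable fun y => (1 + ‖y‖) ^ d • g y) {t : ℝ} (ht : 0 < t)
    (x : EuclideanSpace ℝ (Fin (n - 1))) :
    HasDerivAt (fun τ => sliceConv (pd (finUp r) u) f τ x)
      (sliceConv (pd (lastIdx n hn) u) g t x) t := by
  have hpd1 : ∀ j, ContDiffOn ℝ 1 (pd j u) {0}ᶜ :=
    contDiffOn_pd hu isOpen_compl_singleton one_add_one_eq_two.le
  have hcomm : sliceConv (pd (finUp r) (pd (lastIdx n hn) u)) f t x =
      sliceConv (pd (lastIdx n hn) (pd (finUp r) u)) f t x :=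
    sliceConv_congr hn (fun z hz => pd_comm (hu.contDiffAt (isOpen_ne.mem_nhds hz)) _ _) ht
  rw [hfg.sliceConv_eq hn hul (hpd1 _) hd hf hg ht x, hcomm]
  exact hasDerivAt_sliceConv hn hur (hpd1 _) hd hf ht x

lemma hasDerivAt_sliceConv_of_sum_pd_eq_zero {W : Fin n → EuclideanSpace ℝ (Fin n) → ℂ}
    {g : Fin (n - 1) → EuclideanSpace ℝ (Fin (n - 1)) → ℂ} (hW : ∀ s, PosHomogeneous d (W s))
    (hW1 : ∀ s, ContDiffOn ℝ 1 (W s) {0}ᶜ) (hdiv : ∀ z, z ≠ 0 → ∑ s, pd s (W s) z = 0)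
    (hd : d ≤ 0) (hfg : ∀ s, IsWeakDeriv 1 (fun _ => s) f (g s))
    (hf : Integrable fun y => (1 + ‖y‖) ^ d • f y)
    (hg : ∀ s, Integrable fun y => (1 + ‖y‖) ^ d • g s y) {t : ℝ} (ht : 0 < t)
    (x : EuclideanSpace ℝ (Fin (n - 1))) :
    HasDerivAt (fun τ => sliceConv (W (lastIdx n hn)) f τ x)
      (-∑ s, sliceConv (W (finUp s)) (g s) t x) t := by
  convert hasDerivAt_sliceConv hn (hW _) (hW1 _) hd hf ht x using 1
  calc -∑ s, sliceConv (W (finUp s)) (g s) t x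
      = ∑ s, -1 * sliceConv (pd (finUp s) (W (finUp s))) f t x := by
        rw [← Finset.mul_sum, neg_one_mul]
        exact congrArg _ (Finset.sum_congr rfl fun s _ =>
          (hfg s).sliceConv_eq hn (hW _) (hW1 _) hd hf (hg s) ht x)
    _ = sliceConv (fun z => ∑ s, -1 * pd (finUp s) (W (finUp s)) z) f t x :=
        (sliceConv_sum _ fun s => integrable_sliceConv_pd hn (hW _) (hW1 _) hd hf ht x _).symm
    _ = sliceConv (pd (lastIdx n hn) (W (lastIdx n hn))) f t x :=
        sliceConv_congr hn (fun z hz => by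
          rw [← Finset.mul_sum, neg_one_mul, neg_eq_iff_add_eq_zero, ← sum_finUp_add_lastIdx hn
            fun s => pd s (W s) z, hdiv z hz]) ht

lemma hasDerivAt_sliceConv_coord_smul {κ : EuclideanSpace ℝ (Fin n) → ℂ}
    {g : Fin (n - 1) → EuclideanSpace ℝ (Fin (n - 1)) → ℂ} (hκ : PosHomogeneous (-(n : ℤ)) κ)
    (hκ1 : ∀ s, ContDiffOn ℝ 1 (fun z => z s • κ z) {0}ᶜ)
    (hfg : ∀ s, IsWeakDeriv 1 (fun _ => s) f (g s))
    (hf : Integrable fun y => (1 + ‖y‖) ^ (1 - n : ℤ) • f y)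
    (hg : ∀ s, Integrable fun y => (1 + ‖y‖) ^ (1 - n : ℤ) • g s y) {t : ℝ} (ht : 0 < t)
    (x : EuclideanSpace ℝ (Fin (n - 1))) :
    HasDerivAt (fun τ => sliceConv (fun z => z (lastIdx n hn) • κ z) f τ x)
      (-∑ s, sliceConv (fun z => z (finUp s) • κ z) (g s) t x) t := by
  refine hasDerivAt_sliceConv_of_sum_pd_eq_zero hn (W := fun s z => z s • κ z)
    (fun s => by simpa only [neg_add_eq_sub] using hκ.coord_smul s) hκ1 (fun z hz => ?_)
    (sub_nonpos.2 (mod_cast hn)) hfg hf hg ht x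
  rw [hκ.sum_pd_coord_smul hz (((contDiffOn_of_coord_smul hκ1).differentiableOn
    one_ne_zero).differentiableAt (isOpen_ne.mem_nhds hz))]
  simp

lemma hasDerivAt_sliceConv_coord_smul_of_eq_sum {ι : Type*} [Fintype ι]
    {κ : EuclideanSpace ℝ (Fin n) → ℂ} {v : ι → EuclideanSpace ℝ (Fin n) → ℂ} {c : Fin n → ι → ℂ}
    {g : Fin (n - 1) → EuclideanSpace ℝ (Fin (n - 1)) → ℂ} (hκ : PosHomogeneous (-(n : ℤ)) κ)
    (hv : ∀ i, PosHomogeneous (1 - n : ℤ) (v i)) (hv1 : ∀ i, ContDiffOn ℝ 1 (v i) {0}ᶜ)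
    (hvκ : ∀ z, z ≠ 0 → ∀ s, ∑ i, c s i * v i z = z s • κ z)
    (hfg : ∀ s, IsWeakDeriv 1 (fun _ => s) f (g s))
    (hf : Integrable fun y => (1 + ‖y‖) ^ (1 - n : ℤ) • f y)
    (hg : ∀ s, Integrable fun y => (1 + ‖y‖) ^ (1 - n : ℤ) • g s y) {t : ℝ} (ht : 0 < t)
    (x : EuclideanSpace ℝ (Fin (n - 1))) :
    HasDerivAt (fun τ => sliceConv (fun z => z (lastIdx n hn) • κ z) f τ x)
      (-∑ s, ∑ i, c (finUp s) i * sliceConv (v i) (g s) t x) t := by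
  have hκ1 : ∀ s, ContDiffOn ℝ 1 (fun z => z s • κ z) {0}ᶜ := fun s =>
    (ContDiffOn.sum fun i _ => contDiffOn_const.mul (hv1 i)).congr fun z hz => (hvκ z hz s).symm
  have hexpand : ∀ s, sliceConv (fun z => z (finUp s) • κ z) (g s) t x =
      ∑ i, c (finUp s) i * sliceConv (v i) (g s) t x := fun s => by
    rw [← sliceConv_congr hn (fun z hz => hvκ z hz (finUp s)) ht]
    exact sliceConv_sum _ fun i => integrable_sliceConv hn (hv i) (hv1 i).continuousOn
      (sub_nonpos.2 (mod_cast hn)) (hg s) ht x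
  simpa only [hexpand] using hasDerivAt_sliceConv_coord_smul hn hκ hκ1 hfg hf hg ht x

lemma PosHomogeneous.integral_dilation_mul (hG : PosHomogeneous d G) {t : ℝ} (ht : 0 < t)
    (x : EuclideanSpace ℝ (Fin (n - 1))) :
    ∫ y, ((t : ℂ) ^ d * G (toUp (t⁻¹ • (x - y)) 1)) * f y = sliceConv G f t x := by
  simp only [sliceConv, ← hG.zpow_smul_comp_toUp hn _ ht, Complex.real_smul, Complex.ofReal_zpow]

lemma PosHomogeneous.integral_sum_dilation_mul {ι : Type*} [Fintype ι]
    {G : ι → EuclideanSpace ℝ (Fin n) → ℂ} {f : EuclideanSpace ℝ (Fin (n - 1)) → ι → ℂ}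
    (hG : ∀ i, PosHomogeneous d (G i)) (hc : ∀ i, ContinuousOn (G i) {0}ᶜ) (hd : d ≤ 0)
    (hf : ∀ i, Integrable fun y => (1 + ‖y‖) ^ d • f y i) {t : ℝ} (ht : 0 < t)
    (x : EuclideanSpace ℝ (Fin (n - 1))) :
    ∫ y, ∑ i, ((t : ℂ) ^ d * G i (toUp (t⁻¹ • (x - y)) 1)) * f y i =
      ∑ i, sliceConv (G i) (fun y => f y i) t x := by
  simp only [sliceConv, ← integral_finsetSum _ fun i _ =>
    integrable_sliceConv hn (hG i) (hc i) hd (hf i) ht x]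
  simp only [← (hG _).zpow_smul_comp_toUp hn _ ht, Complex.real_smul, Complex.ofReal_zpow]

lemma hasDerivAt_integral_sum_dilation_pd_finUp_mul {ι : Type*} [Fintype ι]
    {u : ι → EuclideanSpace ℝ (Fin n) → ℂ} {f g : EuclideanSpace ℝ (Fin (n - 1)) → ι → ℂ}
    {r : Fin (n - 1)} (hu : ∀ i, ContDiffOn ℝ 2 (u i) {0}ᶜ)
    (hpd : ∀ i j, PosHomogeneous d (pd j (u i))) (hd : d ≤ 0)
    (hfg : ∀ i, IsWeakDeriv 1 (fun _ => r) (fun y => f y i) (fun y => g y i))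
    (hf : ∀ i, Integrable fun y => (1 + ‖y‖) ^ d • f y i)
    (hg : ∀ i, Integrable fun y => (1 + ‖y‖) ^ d • g y i) {t : ℝ} (ht : 0 < t)
    (x : EuclideanSpace ℝ (Fin (n - 1))) :
    HasDerivAt
      (fun τ : ℝ =>
        ∫ y, ∑ i, ((τ : ℂ) ^ d * pd (finUp r) (u i) (toUp (τ⁻¹ • (x - y)) 1)) * f y i)
      (∫ y, ∑ i, ((t : ℂ) ^ d * pd (lastIdx n hn) (u i) (toUp (t⁻¹ • (x - y)) 1)) * g y i) t := by
  have hc : ∀ i j, ContinuousOn (pd j (u i)) {0}ᶜ := fun i j =>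
    (contDiffOn_pd (hu i) isOpen_compl_singleton one_add_one_eq_two.le j).continuousOn
  rw [PosHomogeneous.integral_sum_dilation_mul hn (hpd · _) (hc · _) hd hg ht]
  refine (HasDerivAt.fun_sum fun i _ => hasDerivAt_sliceConv_pd_finUp hn (hu i) (hpd i _)
    (hpd i _) hd (hfg i) (hf i) (hg i) ht x).congr_of_eventuallyEq ?_
  filter_upwards [lt_mem_nhds ht] with τ hτ using
    PosHomogeneous.integral_sum_dilation_mul hn (hpd · _) (hc · _) hd hf hτ x

lemma hasDerivAt_integral_sum_dilation_mul_of_eq_sum {ι J : Type*} [Fintype ι] [Fintype J]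
    {κ : ι → EuclideanSpace ℝ (Fin n) → ℂ} {v : J → EuclideanSpace ℝ (Fin n) → ℂ}
    {c : Fin n → ι → J → ℂ} {f : EuclideanSpace ℝ (Fin (n - 1)) → ι → ℂ}
    {g : Fin (n - 1) → ι → EuclideanSpace ℝ (Fin (n - 1)) → ℂ}
    (hκ : ∀ i, PosHomogeneous (-(n : ℤ)) (κ i)) (hv : ∀ j, PosHomogeneous (1 - n : ℤ) (v j))
    (hv1 : ∀ j, ContDiffOn ℝ 1 (v j) {0}ᶜ)
    (hvκ : ∀ i z, z ≠ 0 → ∀ s, ∑ j, c s i j * v j z = z s • κ i z)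
    (hfg : ∀ s i, IsWeakDeriv 1 (fun _ => s) (fun y => f y i) (g s i))
    (hf : ∀ i, Integrable fun y => (1 + ‖y‖) ^ (1 - n : ℤ) • f y i)
    (hg : ∀ s i, Integrable fun y => (1 + ‖y‖) ^ (1 - n : ℤ) • g s i y) {t : ℝ} (ht : 0 < t)
    (x : EuclideanSpace ℝ (Fin (n - 1))) :
    HasDerivAt
      (fun τ : ℝ => ∫ y, ∑ i, ((τ : ℂ) ^ (1 - n : ℤ) * κ i (toUp (τ⁻¹ • (x - y)) 1)) * f y i)
      (-∑ s, ∑ i, ∑ j, c (finUp s) i j *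
        ∫ y, ((t : ℂ) ^ (1 - n : ℤ) * v j (toUp (t⁻¹ • (x - y)) 1)) * g s i y) t := by
  have hsum := HasDerivAt.fun_sum (u := Finset.univ) fun i _ =>
    hasDerivAt_sliceConv_coord_smul_of_eq_sum hn (hκ i) hv hv1 (hvκ i) (hfg · i) (hf i) (hg · i)
      ht x
  rw [Finset.sum_neg_distrib, Finset.sum_comm] at hsum
  simp only [(hv _).integral_dilation_mul hn ht]
  refine hsum.congr_of_eventuallyEq ?_
  filter_upwards [lt_mem_nhds ht] with τ hτ
  rw [← PosHomogeneous.integral_sum_dilation_mul hn (fun i => ?_) (fun i => ?_)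
    (sub_nonpos.2 (mod_cast hn)) hf hτ]
  · simp only [toUp_lastIdx, one_smul]
  · simpa only [neg_add_eq_sub] using (hκ i).coord_smul (lastIdx n hn)
  · exact (continuousOn_finsetSum _ fun j _ => (hv1 j).continuousOn.const_mul _).congr
      fun z hz => (hvκ i z hz _).symm

end SliceConv

theorem statement16_general (n M : ℕ) (hn : 0 < n) (A : Fin n → Fin n → Fin M → Fin M → ℂ)
    (E : EuclideanSpace ℝ (Fin n) → Matrix (Fin M) (Fin M) ℂ)
    (hEreg : ∀ γ β, ContDiffOn ℝ 2 (fun x => E x γ β) {0}ᶜ)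
    (hEhom : ∀ γ β r, PosHomogeneous (1 - n : ℤ) (pd r fun y => E y γ β))
    (k : EuclideanSpace ℝ (Fin n) → Matrix (Fin M) (Fin M) ℂ)
    (hkhom : ∀ γ α, PosHomogeneous (-(n : ℤ)) fun x => k x γ α)
    (hk : ∀ x, x ≠ 0 → ∀ s γ α,
      ∑ r, ∑ β, A r s β α * pd r (fun y => E y γ β) x = (x s : ℂ) * k x γ α)
    (f : EuclideanSpace ℝ (Fin (n - 1)) → Fin M → ℂ)
    (g : Fin (n - 1) → Fin M → EuclideanSpace ℝ (Fin (n - 1)) → ℂ)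
    (hf : ∀ α, Integrable fun y => (1 + ‖y‖) ^ (1 - n : ℤ) • f y α)
    (hg : ∀ s α, Integrable fun y => (1 + ‖y‖) ^ (1 - n : ℤ) • g s α y)
    (hfg : ∀ s α, IsWeakDeriv 1 (fun _ => s) (fun y => f y α) (g s α))
    (t : ℝ) (ht : 0 < t) (γ : Fin M) (x' : EuclideanSpace ℝ (Fin (n - 1))) :
    HasDerivAt
      (fun τ : ℝ => ∫ y', ∑ α, ((τ : ℂ) ^ (1 - n : ℤ) *
        (2 * k (toUp (τ⁻¹ • (x' - y')) 1) γ α)) * f y' α)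
      (-2 * ∑ s : Fin (n - 1), ∑ r, ∑ α, ∑ β, A r (finUp s) β α *
        ∫ y', ((t : ℂ) ^ (1 - n : ℤ) * Qker E r γ β (t⁻¹ • (x' - y'))) * g s α y') t ∧
    ∀ r : Fin (n - 1), HasDerivAt
      (fun τ : ℝ => ∫ y', ∑ α, ((τ : ℂ) ^ (1 - n : ℤ) *
        Qker E (finUp r) γ α (τ⁻¹ • (x' - y'))) * f y' α)
      (∫ y', ∑ α, ((t : ℂ) ^ (1 - n : ℤ) *
        Qker E (lastIdx n hn) γ α (t⁻¹ • (x' - y'))) * g r α y') t := by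
  refine ⟨?_, fun r => hasDerivAt_integral_sum_dilation_pd_finUp_mul hn (hEreg γ) (hEhom γ)
    (sub_nonpos.2 (mod_cast hn)) (hfg r) hf (hg r) ht x'⟩
  have hpoisson := hasDerivAt_integral_sum_dilation_mul_of_eq_sum hn (J := Fin n × Fin M)
    (v := fun j => pd j.1 fun y => E y γ j.2) (c := fun s α j => A j.1 s j.2 α) (hkhom γ)
    (fun j => hEhom γ j.2 j.1)
    (fun j => contDiffOn_pd (hEreg γ j.2) isOpen_compl_singleton one_add_one_eq_two.le j.1)
    (fun α z hz s => (Fintype.sum_prod_type _).trans (hk z hz s γ α)) hfg hf hg ht x'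
  simp only [mul_left_comm _ (2 : ℂ), mul_assoc (2 : ℂ), ← Finset.mul_sum, integral_const_mul]
  refine (hpoisson.const_mul (2 : ℂ)).congr_deriv ?_
  simp only [Fintype.sum_prod_type, neg_mul, mul_neg]
  congr! 3 with s
  exact Finset.sum_comm

/-- The convolution identities: for `f ∈ L^p_1(ℝ^{n-1}; ℂ^M)` with weak
first-order derivatives `g`, (i)
`∂_t[(P_t*f)_γ] = -2 Σ_{s<n} Σ_{r,α,β} a^{βα}_{rs} ((Q^{(r)}_{γβ})_t * ∂_s f_α)`, and (ii)
`∂_t[(Q^{(r)}_t * f)_γ] = (Q^{(n)}_t * ∂_r f)_γ` for `r < n`. Here `P = 2k(·,1)` and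
`A r s β α` stands for `a^{βα}_{rs}`. -/
theorem statement16
    (n M : ℕ) (hn : 2 ≤ n) (hM : 1 ≤ M)
    (A : Fin n → Fin n → Fin M → Fin M → ℂ)
    (E : EuclideanSpace ℝ (Fin n) → Matrix (Fin M) (Fin M) ℂ)
    (hEreg : ∀ γ β : Fin M,
      ContDiffOn ℝ 2 (fun x => E x γ β) {x : EuclideanSpace ℝ (Fin n) | x ≠ 0})
    (hEhom : ∀ (γ β : Fin M) (r : Fin n) (l : ℝ), 0 < l →
      ∀ x : EuclideanSpace ℝ (Fin n), x ≠ 0 →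
        pd r (fun y => E y γ β) (l • x)
          = ((l : ℂ) ^ ((1 : ℤ) - (n : ℤ))) * pd r (fun y => E y γ β) x)
    (k : EuclideanSpace ℝ (Fin n) → Matrix (Fin M) (Fin M) ℂ)
    (hkcont : ∀ γ α : Fin M,
      ContinuousOn (fun x => k x γ α) {x : EuclideanSpace ℝ (Fin n) | x ≠ 0})
    (hkhom : ∀ (γ α : Fin M) (l : ℝ), 0 < l →
      ∀ x : EuclideanSpace ℝ (Fin n), x ≠ 0 →
        k (l • x) γ α = ((l : ℂ) ^ (-(n : ℤ))) * k x γ α)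
    (hk : ∀ x : EuclideanSpace ℝ (Fin n), x ≠ 0 → ∀ (s : Fin n) (γ α : Fin M),
      (∑ r, ∑ β, A r s β α * pd r (fun y => E y γ β) x) = ((x s : ℝ) : ℂ) * k x γ α)
    (p : ℝ) (hp : 1 < p)
    (f : EuclideanSpace ℝ (Fin (n - 1)) → Fin M → ℂ)
    (g : Fin (n - 1) → Fin M → EuclideanSpace ℝ (Fin (n - 1)) → ℂ)
    (hf : MemLp f (ENNReal.ofReal p) volume)
    (hg : ∀ (s : Fin (n - 1)) (α : Fin M),
      MemLp (g s α) (ENNReal.ofReal p) volume ∧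
        IsWeakDeriv 1 (fun _ => s) (fun y => f y α) (g s α)) :
    ∀ (t : ℝ), 0 < t → ∀ (γ : Fin M) (x' : EuclideanSpace ℝ (Fin (n - 1))),
      (deriv (fun τ : ℝ =>
          ∫ y' : EuclideanSpace ℝ (Fin (n - 1)), ∑ α,
            (((τ : ℂ) ^ ((1 : ℤ) - (n : ℤ))) *
              (2 * k (toUp (τ⁻¹ • (x' - y')) 1) γ α)) * f y' α) t
        = -2 * ∑ s : Fin (n - 1), ∑ r : Fin n, ∑ α : Fin M, ∑ β : Fin M,
            A r (finUp s) β α *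
              ∫ y' : EuclideanSpace ℝ (Fin (n - 1)),
                (((t : ℂ) ^ ((1 : ℤ) - (n : ℤ))) * Qker E r γ β (t⁻¹ • (x' - y')))
                  * g s α y') ∧
      (∀ r : Fin (n - 1),
        deriv (fun τ : ℝ =>
            ∫ y' : EuclideanSpace ℝ (Fin (n - 1)), ∑ α,
              (((τ : ℂ) ^ ((1 : ℤ) - (n : ℤ))) *
                Qker E (finUp r) γ α (τ⁻¹ • (x' - y'))) * f y' α) t
          = ∫ y' : EuclideanSpace ℝ (Fin (n - 1)), ∑ α,
              (((t : ℂ) ^ ((1 : ℤ) - (n : ℤ))) *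
                Qker E (lastIdx n (by omega)) γ α (t⁻¹ • (x' - y'))) * g r α y') := by
  intro t ht γ x'
  have hweight {F : EuclideanSpace ℝ (Fin (n - 1)) → ℂ} :=
    integrable_one_add_norm_zpow_smul_of_memLp_euclideanSpace (f := F) hn hp.le
  obtain ⟨hP, hQ⟩ := statement16_general n M (by omega) A E hEreg
    (fun γ β r => PosHomogeneous.complex_iff.2 (hEhom γ β r)) k
    (fun γ α => PosHomogeneous.complex_iff.2 (hkhom γ α)) hk f g
    (fun α => hweight (memLp_pi_iff.1 hf α)) (fun s α => hweight (hg s α).1)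
    (fun s α => (hg s α).2) t ht γ x'
  exact ⟨hP.deriv, fun r => (hQ r).deriv⟩

end
end

section
/- Let n ≥ 2 and let λ,μ ∈ ℝ satisfy μ > 0 and 2μ + λ > 0. For θ ∈ ℝ define the coefficient tensor A(θ) with entries a^{αβ}_{rs}(θ) := μ δ_{rs}δ_{αβ} + (λ+μ-θ) δ_{rα}δ_{sβ} + θ δ_{rβ}δ_{sα} for 1 ≤ α,β,r,s ≤ n (so that L_{A(θ)} is the Lamé operator Lu = μΔu + (λ+μ)∇div u for every θ). Let S(ξ) := [-(Σ_{r,s} ξ_rξ_s A_{rs}(θ))]^{-1} ∈ ℂ^{n×n} for ξ ∈ ℝⁿ∖{0}, where A_{rs}(θ) := (a^{αβ}_{rs}(θ))_{α,β} (this matrix S(ξ) does not depend on θ). Then the following two statements are equivalent: (1) for all s,s' ∈ {1,…,n}, all α,γ ∈ {1,…,n}, and all ξ ∈ ℝⁿ∖{0}, Σ_β [a^{βα}_{s's}(θ) - a^{βα}_{ss'}(θ)] S_{γβ}(ξ) + Σ_{r,β} ξ_r a^{βα}_{rs}(θ)(∂_{ξ_{s'}}S_{γβ})(ξ) - Σ_{r,β}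 ξ_r a^{βα}_{rs'}(θ)(∂_{ξ_s}S_{γβ})(ξ) = 0, and, in the case n = 2, additionally ∫_{S¹} Σ_{r,β}(a^{βα}_{rs}(θ)ξ_{s'} - a^{βα}_{rs'}(θ)ξ_s)(ξ_r S_{γβ}(ξ)) dσ(ξ) = 0 for all s,s',α,γ; (2) θ = μ(λ+μ)/(3μ+λ). -/
open MeasureTheory Filter Metric Real
open scoped ENNReal NNReal Topology

noncomputable section

/-!
Fix `γ`, `α` and let `F` be the one-form on `ℝⁿ ∖ {0}` with components
`F_s = ∑ ξ_r a^{βα}_{rs} S_{γβ}`. By the product rule the differential condition says that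
`∂_{s'} F_s = ∂_s F_{s'}`, i.e. that `F` is closed, and the condition for `n = 2` says that `F` has
no circulation around the unit circle.

Inverting the symbol by the Sherman–Morrison formula gives, with `x = ξ / |ξ|`,
`F = -d(δ_{γα} log |ξ| + (θ / μ) x_α x_γ) - κ x_γ dx_α`, where
`κ = (μ(λ+μ) - θ(3μ+λ)) / (μ(2μ+λ))`. If `κ = 0` then `F` is exact and both conditions hold. The
remaining form `x_γ dx_α` is not closed for `n ≥ 3`, while for `n = 2` it is closed but has
circulation `±π` for `γ ≠ α`; hence each time `κ = 0` is forced.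
-/

local notation "δ[" i ", " j "]" => (if i = j then 1 else 0)

/-- The coefficient tensor `a^{αβ}_{rs}(θ)` of the Lamé operator with moduli `lam`, `mu`,
with the index order `lameTensor lam mu θ r s α β`. -/
def lameTensor {ι R : Type*} [DecidableEq ι] [CommRing R] (lam mu θ : R) (r s α β : ι) : R :=
  mu * δ[r, s] * δ[α, β] + (lam + mu - θ) * δ[r, α] * δ[s, β] + θ * δ[r, β] * δ[s, α]

/-- The inverse `S(ξ)` of the symbol matrix `-∑ ξ_r ξ_s a^{αβ}_{rs}` of the system with coefficient
tensor `A r s α β = a^{αβ}_{rs}`. -/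
def symbolInv {n : ℕ} {ι : Type*} [Fintype ι] [DecidableEq ι] (A : Fin n → Fin n → ι → ι → ℂ)
    (ξ : EuclideanSpace ℝ (Fin n)) : Matrix ι ι ℂ :=
  (Matrix.of fun α β => -(∑ r, ∑ s, (ξ r : ℂ) * (ξ s : ℂ) * A r s α β))⁻¹

/-- The point of `ℝⁿ` with first coordinate `cos u` and all others `sin u`; for `n = 2` this is the
arc-length parametrization of the unit circle. -/
def circlePoint (n : ℕ) (u : ℝ) : EuclideanSpace ℝ (Fin n) :=
  (WithLp.equiv 2 (Fin n → ℝ)).symm fun i => if (i : ℕ) = 0 then Real.cos u else Real.sin u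

/-- A distinguished coefficient tensor: the differential condition on `S` away from the origin and,
in dimension two, the integral condition over the unit circle. -/
def IsDistinguished {n : ℕ} {ι : Type*} [Fintype ι] [DecidableEq ι]
    (A : Fin n → Fin n → ι → ι → ℂ) : Prop :=
  (∀ (s s' : Fin n) (α γ : ι), ∀ ξ : EuclideanSpace ℝ (Fin n), ξ ≠ 0 →
    (∑ β, (A s' s β α - A s s' β α) * symbolInv A ξ γ β)
      + (∑ r, ∑ β, (ξ r : ℂ) * A r s β α * pd s' (fun ζ => symbolInv A ζ γ β) ξ)
      - (∑ r, ∑ β, (ξ r : ℂ) * A r s' β α * pd s (fun ζ => symbolInv A ζ γ β) ξ) = 0) ∧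
  (n = 2 → ∀ (s s' : Fin n) (α γ : ι),
    ∫ u in (0 : ℝ)..(2 * π),
      ∑ r, ∑ β, (A r s β α * (circlePoint n u s' : ℂ) - A r s' β α * (circlePoint n u s : ℂ))
        * ((circlePoint n u r : ℂ) * symbolInv A (circlePoint n u) γ β) = 0)

/-- The `s`-th component `∑ ξ_r a^{βα}_{rs} S_{γβ}(ξ)` of the one-form on `ℝⁿ ∖ {0}` whose
closedness and circulation around the circle are the two conditions in `IsDistinguished`. -/
def flux {n : ℕ} {ι : Type*} [Fintype ι] [DecidableEq ι] (A : Fin n → Fin n → ι → ι → ℂ)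
    (γ α : ι) (s : Fin n) (ξ : EuclideanSpace ℝ (Fin n)) : ℂ :=
  ∑ r, ∑ β, (ξ r : ℂ) * A r s β α * symbolInv A ξ γ β

section PartialDerivatives

variable {n : ℕ} {ξ : EuclideanSpace ℝ (Fin n)}

section

variable {F : Type*} [NormedAddCommGroup F] [NormedSpace ℝ F] {f g : EuclideanSpace ℝ (Fin n) → F}

lemma pd_add (i : Fin n) (hf : DifferentiableAt ℝ f ξ) (hg : DifferentiableAt ℝ g ξ) :
    pd i (fun ζ => f ζ + g ζ) ξ = pd i f ξ + pd i g ξ := by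
  simp only [pd, fderiv_fun_add hf hg, add_apply]

lemma pd_sub (i : Fin n) (hf : DifferentiableAt ℝ f ξ) (hg : DifferentiableAt ℝ g ξ) :
    pd i (fun ζ => f ζ - g ζ) ξ = pd i f ξ - pd i g ξ := by
  simp only [pd, fderiv_fun_sub hf hg, sub_apply]

lemma pd_sum {κ : Type*} (t : Finset κ) {f : κ → EuclideanSpace ℝ (Fin n) → F} (i : Fin n)
    (hf : ∀ k ∈ t, DifferentiableAt ℝ (f k) ξ) :
    pd i (fun ζ => ∑ k ∈ t, f k ζ) ξ = ∑ k ∈ t, pd i (f k) ξ := by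
  simp only [pd, fderiv_fun_sum hf, sum_apply]

end

section

variable {R : Type*} [NormedCommRing R] [NormedAlgebra ℝ R] {f g : EuclideanSpace ℝ (Fin n) → R}

lemma pd_mul (i : Fin n) (hf : DifferentiableAt ℝ f ξ) (hg : DifferentiableAt ℝ g ξ) :
    pd i (fun ζ => f ζ * g ζ) ξ = pd i f ξ * g ξ + f ξ * pd i g ξ := by
  simp only [pd, fderiv_fun_mul hf hg, add_apply, smul_apply, smul_eq_mul]
  ring

lemma pd_const_mul (i : Fin n) (c : R) (hf : DifferentiableAt ℝ f ξ) :
    pd i (fun ζ => c * f ζ) ξ = c * pd i f ξ := by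
  simp only [pd, fderiv_const_mul hf c, smul_apply, smul_eq_mul]

end

variable {f : EuclideanSpace ℝ (Fin n) → ℂ}

lemma pd_comp (i : Fin n) {φ : ℂ → ℂ} {φ' : ℂ} (hφ : HasDerivAt φ φ' (f ξ))
    (hf : DifferentiableAt ℝ f ξ) : pd i (fun ζ => φ (f ζ)) ξ = φ' * pd i f ξ := by
  have h := (hφ.hasFDerivAt.restrictScalars ℝ).comp ξ hf.hasFDerivAt
  simp only [pd, ← Function.comp_def, h.fderiv, ContinuousLinearMap.comp_apply]
  simp [mul_comm]

lemma hasFDerivAt_coord (i : Fin n) (ξ : EuclideanSpace ℝ (Fin n)) :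
    HasFDerivAt (fun ζ : EuclideanSpace ℝ (Fin n) => (ζ i : ℂ))
      (Complex.ofRealCLM.comp (EuclideanSpace.proj i)) ξ :=
  (Complex.ofRealCLM.comp (EuclideanSpace.proj i : EuclideanSpace ℝ (Fin n) →L[ℝ] ℝ)).hasFDerivAt

@[fun_prop]
lemma differentiableAt_coord (i : Fin n) (ξ : EuclideanSpace ℝ (Fin n)) :
    DifferentiableAt ℝ (fun ζ : EuclideanSpace ℝ (Fin n) => (ζ i : ℂ)) ξ :=
  (hasFDerivAt_coord i ξ).differentiableAt

lemma pd_coord (i j : Fin n) (ξ : EuclideanSpace ℝ (Fin n)) :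
    pd j (fun ζ => (ζ i : ℂ)) ξ = δ[i, j] := by
  simp [pd, (hasFDerivAt_coord i ξ).fderiv, apply_ite]

lemma hasFDerivAt_coe_norm {E : Type*} [NormedAddCommGroup E] [InnerProductSpace ℝ E] {x : E}
    (hx : x ≠ 0) :
    HasFDerivAt (fun y : E => (‖y‖ : ℂ)) (Complex.ofRealCLM.comp (‖x‖⁻¹ • innerSL ℝ x)) x := by
  have h := (hasStrictFDerivAt_norm_sq x).hasFDerivAt.sqrt (by simpa using hx)
  have rescale : (1 / (2 * ‖x‖)) • 2 • innerSL ℝ x = ‖x‖⁻¹ • innerSL ℝ x := by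
    ext y
    simp only [one_div, mul_inv_rev, smul_apply, nsmul_eq_mul, Nat.cast_ofNat, smul_eq_mul]
    ring
  simp only [Real.sqrt_sq (norm_nonneg _), rescale] at h
  exact Complex.ofRealCLM.hasFDerivAt.comp x h

@[fun_prop]
lemma differentiableAt_coe_norm {E : Type*} [NormedAddCommGroup E] [InnerProductSpace ℝ E] {x : E}
    (hx : x ≠ 0) : DifferentiableAt ℝ (fun y : E => (‖y‖ : ℂ)) x :=
  (hasFDerivAt_coe_norm hx).differentiableAt

lemma pd_coe_norm (j : Fin n) (hξ : ξ ≠ 0) : pd j (fun ζ => (‖ζ‖ : ℂ)) ξ = ξ j / ‖ξ‖ := by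
  simp [pd, (hasFDerivAt_coe_norm hξ).fderiv, EuclideanSpace.inner_single_right, div_eq_inv_mul]

@[fun_prop]
lemma differentiableAt_div {E K : Type*} [NormedAddCommGroup E] [NormedSpace ℝ E] [NormedField K]
    [NormedAlgebra ℝ K] {f g : E → K} {x : E} (hf : DifferentiableAt ℝ f x)
    (hg : DifferentiableAt ℝ g x) (h0 : g x ≠ 0) : DifferentiableAt ℝ (fun y => f y / g y) x := by
  simpa only [div_eq_mul_inv] using hf.fun_mul (hg.fun_inv h0)

lemma pd_div_norm_pow (k : ℕ) (j : Fin n) (hf : DifferentiableAt ℝ f ξ) (hξ : ξ ≠ 0) :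
    pd j (fun ζ => f ζ / (‖ζ‖ : ℂ) ^ k) ξ
      = pd j f ξ / (‖ξ‖ : ℂ) ^ k - k * ξ j * f ξ / (‖ξ‖ : ℂ) ^ (k + 2) := by
  have hq : (‖ξ‖ : ℂ) ≠ 0 := by simpa using hξ
  have hφ : HasDerivAt (fun z : ℂ => (z ^ k)⁻¹) _ (‖ξ‖ : ℂ) :=
    (hasDerivAt_pow k _).fun_inv (pow_ne_zero k hq)
  have hinv : DifferentiableAt ℝ (fun ζ : EuclideanSpace ℝ (Fin n) => ((‖ζ‖ : ℂ) ^ k)⁻¹) ξ :=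
    DifferentiableAt.fun_inv (by fun_prop (disch := assumption)) (pow_ne_zero k hq)
  simp only [div_eq_mul_inv]
  rw [pd_mul j hf hinv, pd_comp (φ := fun z => (z ^ k)⁻¹) j hφ (differentiableAt_coe_norm hξ),
    pd_coe_norm j hξ]
  rcases k with _ | k
  · simp
  · simp only [add_tsub_cancel_right]
    field_simp
    ring

end PartialDerivatives

section Symbol

lemma inv_smul_one_add_smul_vecMulVec {ι K : Type*} [Fintype ι] [DecidableEq ι] [Field K]
    {a b : K} {x y : ι → K} (ha : a ≠ 0) (hab : a + b * (y ⬝ᵥ x) ≠ 0) :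
    (a • (1 : Matrix ι ι K) + b • Matrix.vecMulVec x y)⁻¹
      = a⁻¹ • (1 : Matrix ι ι K) - (b / (a * (a + b * (y ⬝ᵥ x)))) • Matrix.vecMulVec x y := by
  apply Matrix.inv_eq_left_inv
  simp only [sub_mul, mul_add, Matrix.smul_mul, Matrix.mul_smul, Matrix.one_mul, Matrix.mul_one,
    Matrix.vecMulVec_mul_vecMulVec, Matrix.vecMulVec_smul, smul_smul]
  ext i j
  simp only [Matrix.add_apply, Matrix.sub_apply, Matrix.smul_apply, smul_eq_mul]
  field_simp
  ring

section Contractions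

variable {ι R : Type*} [Fintype ι] [DecidableEq ι] [CommRing R] (lam mu θ : R) (x y : ι → R)

lemma sum_mul_mul_lameTensor (α β : ι) :
    ∑ r, ∑ s, x r * x s * lameTensor lam mu θ r s α β
      = mu * (x ⬝ᵥ x) * δ[α, β] + (lam + mu) * (x α * x β) := by
  have summand (r s : ι) : x r * x s * lameTensor lam mu θ r s α β
      = δ[r, s] * (mu * δ[α, β] * (x r * x s))
        + δ[r, α] * (δ[s, β] * ((lam + mu - θ) * (x r * x s)))
        + δ[r, β] * (δ[s, α] * (θ * (x r * x s))) := by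
    rw [lameTensor]; ring
  simp only [summand, Finset.sum_add_distrib, ← Finset.mul_sum]
  simp only [ite_mul, one_mul, zero_mul, Finset.sum_ite_eq, Finset.sum_ite_eq', Finset.mem_univ,
    if_true, ← Finset.mul_sum, dotProduct]
  ring

lemma sum_mul_lameTensor_mul (s α : ι) :
    ∑ r, ∑ β, x r * lameTensor lam mu θ r s β α * y β
      = mu * (x s * y α) + (lam + mu - θ) * δ[α, s] * (x ⬝ᵥ y) + θ * (x α * y s) := by
  have summand (r β : ι) : x r * lameTensor lam mu θ r s β α * y β
      = δ[r, s] * (δ[α, β] * (mu * (x r * y β)))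
        + δ[r, β] * ((lam + mu - θ) * δ[α, s] * (x r * y β))
        + δ[r, α] * (δ[s, β] * (θ * (x r * y β))) := by
    simp only [lameTensor, eq_comm (a := s) (b := α), eq_comm (a := β) (b := α)]; ring
  simp only [summand, Finset.sum_add_distrib, ← Finset.mul_sum]
  simp only [ite_mul, one_mul, zero_mul, Finset.sum_ite_eq, Finset.sum_ite_eq', Finset.mem_univ,
    if_true, ← Finset.mul_sum, dotProduct]

end Contractions

lemma coord_dotProduct_self {n : ℕ} (ξ : EuclideanSpace ℝ (Fin n)) :
    (fun i => (ξ i : ℂ)) ⬝ᵥ (fun i => (ξ i : ℂ)) = (‖ξ‖ : ℂ) ^ 2 := by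
  rw [← Complex.ofReal_pow, EuclideanSpace.norm_sq_eq]
  simp [dotProduct, ← sq, ← Complex.ofReal_pow]

variable {n : ℕ} {lam mu : ℂ} (θ : ℂ)

/- At `ξ = 0` both sides vanish, because the inverse of the zero matrix and `x / 0` are `0`. -/
lemma symbolInv_lameTensor (hmu : mu ≠ 0) (hlam : 2 * mu + lam ≠ 0)
    (ξ : EuclideanSpace ℝ (Fin n)) (γ β : Fin n) :
    symbolInv (lameTensor lam mu θ) ξ γ β
      = (lam + mu) / (mu * (2 * mu + lam)) * (ξ γ * ξ β / (‖ξ‖ : ℂ) ^ 4)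
        - mu⁻¹ * (δ[γ, β] / (‖ξ‖ : ℂ) ^ 2) := by
  have symbol : (Matrix.of fun α β =>
        -(∑ r, ∑ s, (ξ r : ℂ) * (ξ s : ℂ) * lameTensor lam mu θ r s α β))
      = (-(mu * (‖ξ‖ : ℂ) ^ 2)) • (1 : Matrix (Fin n) (Fin n) ℂ)
        + (-(lam + mu)) • Matrix.vecMulVec (fun i => (ξ i : ℂ)) (fun i => (ξ i : ℂ)) := by
    ext α β
    simp only [sum_mul_mul_lameTensor lam mu θ (fun i => (ξ i : ℂ)), coord_dotProduct_self,
      Matrix.of_apply, Matrix.add_apply, Matrix.smul_apply, Matrix.one_apply,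
      Matrix.vecMulVec_apply, smul_eq_mul]
    ring
  rw [symbolInv, symbol]
  rcases eq_or_ne ξ 0 with rfl | hξ
  · simp [← Pi.zero_def]
  · have hq : (‖ξ‖ : ℂ) ≠ 0 := by simpa using hξ
    have ha : -(mu * (‖ξ‖ : ℂ) ^ 2) ≠ 0 := by simp [hmu, hq]
    have hab : -(mu * (‖ξ‖ : ℂ) ^ 2) + -(lam + mu) * (‖ξ‖ : ℂ) ^ 2
        = -((2 * mu + lam) * (‖ξ‖ : ℂ) ^ 2) := by ring
    rw [inv_smul_one_add_smul_vecMulVec ha] <;> rw [coord_dotProduct_self, hab]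
    · simp only [Matrix.sub_apply, Matrix.smul_apply, Matrix.one_apply, Matrix.vecMulVec_apply,
        smul_eq_mul]
      split_ifs <;> field_simp <;> ring
    · simp [hlam, hq]

lemma differentiableAt_symbolInv_lameTensor (hmu : mu ≠ 0) (hlam : 2 * mu + lam ≠ 0)
    {ξ : EuclideanSpace ℝ (Fin n)} (hξ : ξ ≠ 0) (γ β : Fin n) :
    DifferentiableAt ℝ (fun ζ => symbolInv (lameTensor lam mu θ) ζ γ β) ξ := by
  have hq : (‖ξ‖ : ℂ) ≠ 0 := by simpa using hξ
  have hq2 := pow_ne_zero 2 hq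
  have hq4 := pow_ne_zero 4 hq
  simp only [symbolInv_lameTensor θ hmu hlam]
  fun_prop (disch := assumption)

/-- The coefficient `κ` of the non-exact part of the flux of the Lamé tensor: the
obstruction to this tensor being distinguished. -/
def lameDefect (lam mu θ : ℂ) : ℂ :=
  (mu * (lam + mu) - θ * (3 * mu + lam)) / (mu * (2 * mu + lam))

lemma lameDefect_eq_zero_iff (hmu : mu ≠ 0) (hlam : 2 * mu + lam ≠ 0) :
    lameDefect lam mu θ = 0 ↔ θ * (3 * mu + lam) = mu * (lam + mu) := by
  rw [lameDefect, div_eq_zero_iff, or_iff_left (mul_ne_zero hmu hlam), sub_eq_zero, eq_comm]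

lemma coord_dotProduct_symbolInv_lameTensor (hmu : mu ≠ 0) (hlam : 2 * mu + lam ≠ 0)
    (γ : Fin n) (ξ : EuclideanSpace ℝ (Fin n)) :
    (fun i => (ξ i : ℂ)) ⬝ᵥ symbolInv (lameTensor lam mu θ) ξ γ
      = -(ξ γ / ((2 * mu + lam) * (‖ξ‖ : ℂ) ^ 2)) := by
  have summand (β : Fin n) : ξ β * symbolInv (lameTensor lam mu θ) ξ γ β
      = (lam + mu) / (mu * (2 * mu + lam)) * (ξ γ / (‖ξ‖ : ℂ) ^ 4) * (ξ β * ξ β)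
        - δ[γ, β] * (mu⁻¹ * (ξ β / (‖ξ‖ : ℂ) ^ 2)) := by
    rw [symbolInv_lameTensor θ hmu hlam]; ring
  have hnorm : ∑ β, (ξ β : ℂ) * ξ β = (‖ξ‖ : ℂ) ^ 2 := coord_dotProduct_self ξ
  simp only [dotProduct, summand, Finset.sum_sub_distrib, ← Finset.mul_sum, hnorm, ite_mul, one_mul,
    zero_mul, Finset.sum_ite_eq, Finset.mem_univ, if_true]
  rcases eq_or_ne ξ 0 with rfl | hξ
  · simp
  · have hq : (‖ξ‖ : ℂ) ≠ 0 := by simpa using hξ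
    have hlam' : mu * 2 + lam ≠ 0 := by rwa [mul_comm]
    field_simp
    ring

lemma flux_lameTensor (hmu : mu ≠ 0) (hlam : 2 * mu + lam ≠ 0)
    (γ α s : Fin n) (ξ : EuclideanSpace ℝ (Fin n)) :
    flux (lameTensor lam mu θ) γ α s ξ
      = θ / mu * (2 * (ξ γ * ξ α * ξ s / (‖ξ‖ : ℂ) ^ 4)
          - δ[γ, s] * (ξ α / (‖ξ‖ : ℂ) ^ 2) - δ[α, s] * (ξ γ / (‖ξ‖ : ℂ) ^ 2))
        - δ[γ, α] * (ξ s / (‖ξ‖ : ℂ) ^ 2)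
        + lameDefect lam mu θ *
          (ξ γ * ξ α * ξ s / (‖ξ‖ : ℂ) ^ 4 - δ[α, s] * (ξ γ / (‖ξ‖ : ℂ) ^ 2)) := by
  rw [flux, sum_mul_lameTensor_mul lam mu θ (fun i => (ξ i : ℂ)) (symbolInv _ ξ γ),
    coord_dotProduct_symbolInv_lameTensor θ hmu hlam,
    symbolInv_lameTensor θ hmu hlam, symbolInv_lameTensor θ hmu hlam, lameDefect]
  rcases eq_or_ne ξ 0 with rfl | hξ
  · simp
  · have hq : (‖ξ‖ : ℂ) ≠ 0 := by simpa using hξ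
    have hlam' : mu * 2 + lam ≠ 0 := by rwa [mul_comm]
    field_simp
    ring

lemma curl_flux_lameTensor (hmu : mu ≠ 0) (hlam : 2 * mu + lam ≠ 0)
    (γ α s s' : Fin n) {ξ : EuclideanSpace ℝ (Fin n)} (hξ : ξ ≠ 0) :
    pd s' (flux (lameTensor lam mu θ) γ α s) ξ - pd s (flux (lameTensor lam mu θ) γ α s') ξ
      = -lameDefect lam mu θ * ((δ[α, s] * δ[γ, s'] - δ[α, s'] * δ[γ, s]) / (‖ξ‖ : ℂ) ^ 2
        - (ξ γ * (δ[α, s] * ξ s' - δ[α, s'] * ξ s)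
          + ξ α * (δ[γ, s'] * ξ s - δ[γ, s] * ξ s')) / (‖ξ‖ : ℂ) ^ 4) := by
  have hq : (‖ξ‖ : ℂ) ≠ 0 := by simpa using hξ
  have hq2 := pow_ne_zero 2 hq
  have hq4 := pow_ne_zero 4 hq
  have closed (t : Fin n) := funext (flux_lameTensor θ hmu hlam γ α t)
  rw [closed, closed]
  simp (disch := fun_prop (disch := assumption)) only [pd_add, pd_sub, pd_const_mul, pd_mul,
    pd_coord, pd_div_norm_pow _ _ _ hξ, eq_comm (a := s') (b := s)]
  field_simp
  ring

end Symbol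

section Circle

@[fun_prop]
lemma continuous_circlePoint_apply {n : ℕ} (i : Fin n) :
    Continuous fun u => (circlePoint n u i : ℂ) := by
  by_cases hi : (i : ℕ) = 0 <;>
    simp only [circlePoint, WithLp.equiv_symm_apply, hi, if_true, if_false] <;> fun_prop

lemma norm_circlePoint_two (u : ℝ) : ‖circlePoint 2 u‖ = 1 := by
  simp [EuclideanSpace.norm_eq, circlePoint]

lemma integral_circlePoint_mul (i j : Fin 2) :
    ∫ u in (0 : ℝ)..(2 * π), (circlePoint 2 u i : ℂ) * (circlePoint 2 u j : ℂ)
      = π * δ[i, j] := by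
  simp_rw [← Complex.ofReal_mul, intervalIntegral.integral_ofReal]
  fin_cases i <;> fin_cases j <;>
    simp [circlePoint, ← sq, mul_comm (Real.cos _)]

lemma circulation_flux_lameTensor {lam mu : ℂ} (θ : ℂ) (hmu : mu ≠ 0) (hlam : 2 * mu + lam ≠ 0)
    (γ α s s' : Fin 2) :
    ∫ u in (0 : ℝ)..(2 * π), (flux (lameTensor lam mu θ) γ α s (circlePoint 2 u) *
        circlePoint 2 u s' - flux (lameTensor lam mu θ) γ α s' (circlePoint 2 u) *
        circlePoint 2 u s)
      = lameDefect lam mu θ * π * (δ[α, s'] * δ[γ, s] - δ[α, s] * δ[γ, s']) := by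
  set c := θ / mu
  have integrand (u : ℝ) : flux (lameTensor lam mu θ) γ α s (circlePoint 2 u) *
        circlePoint 2 u s' - flux (lameTensor lam mu θ) γ α s' (circlePoint 2 u) * circlePoint 2 u s
      = c * δ[γ, s'] * ((circlePoint 2 u α) * (circlePoint 2 u s))
        - c * δ[γ, s] * ((circlePoint 2 u α) * (circlePoint 2 u s'))
        + (c + lameDefect lam mu θ) * δ[α, s'] * ((circlePoint 2 u γ) * (circlePoint 2 u s))
        - (c + lameDefect lam mu θ) * δ[α, s] * ((circlePoint 2 u γ) * (circlePoint 2 u s')) := by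
    simp only [flux_lameTensor θ hmu hlam, norm_circlePoint_two, Complex.ofReal_one, one_pow,
      div_one]
    ring
  simp only [integrand]
  rw [intervalIntegral.integral_sub, intervalIntegral.integral_add, intervalIntegral.integral_sub]
  · simp only [intervalIntegral.integral_const_mul, integral_circlePoint_mul]
    ring
  all_goals exact Continuous.intervalIntegrable (by fun_prop) _ _

end Circle

section Characterization

variable {n : ℕ} {ι : Type*} [Fintype ι] [DecidableEq ι] {A : Fin n → Fin n → ι → ι → ℂ}

lemma pd_flux {ξ : EuclideanSpace ℝ (Fin n)} {γ : ι}
    (hS : ∀ β, DifferentiableAt ℝ (fun ζ => symbolInv A ζ γ β) ξ) (i s : Fin n) (α : ι) :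
    pd i (flux A γ α s) ξ
      = ∑ β, A i s β α * symbolInv A ξ γ β
        + ∑ r, ∑ β, (ξ r : ℂ) * A r s β α * pd i (fun ζ => symbolInv A ζ γ β) ξ := by
  have summand (r : Fin n) (β : ι) :
      pd i (fun ζ => (ζ r : ℂ) * A r s β α * symbolInv A ζ γ β) ξ
        = δ[r, i] * (A r s β α * symbolInv A ξ γ β)
          + ξ r * A r s β α * pd i (fun ζ => symbolInv A ζ γ β) ξ := by
    simp only [mul_assoc]
    rw [pd_mul i (by fun_prop) ((hS β).const_mul _), pd_coord, pd_const_mul i _ (hS β)]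
  unfold flux
  simp (disch := fun_prop) only [pd_sum, summand, Finset.sum_add_distrib]
  simp only [ite_mul, one_mul, zero_mul, Finset.sum_ite_irrel, Finset.sum_const_zero,
    Finset.sum_ite_eq', Finset.mem_univ, if_true]

lemma isDistinguished_iff_flux
    (hS : ∀ ξ ≠ 0, ∀ γ β, DifferentiableAt ℝ (fun ζ => symbolInv A ζ γ β) ξ) :
    IsDistinguished A ↔
      (∀ s s' α γ, ∀ ξ ≠ 0, pd s' (flux A γ α s) ξ - pd s (flux A γ α s') ξ = 0) ∧
      (n = 2 → ∀ s s' α γ, ∫ u in (0 : ℝ)..(2 * π),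
        (flux A γ α s (circlePoint n u) * circlePoint n u s'
          - flux A γ α s' (circlePoint n u) * circlePoint n u s) = 0) := by
  have curl (s s' : Fin n) (α γ : ι) {ξ : EuclideanSpace ℝ (Fin n)} (hξ : ξ ≠ 0) :
      (∑ β, (A s' s β α - A s s' β α) * symbolInv A ξ γ β)
        + (∑ r, ∑ β, (ξ r : ℂ) * A r s β α * pd s' (fun ζ => symbolInv A ζ γ β) ξ)
        - (∑ r, ∑ β, (ξ r : ℂ) * A r s' β α * pd s (fun ζ => symbolInv A ζ γ β) ξ)
      = pd s' (flux A γ α s) ξ - pd s (flux A γ α s') ξ := by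
    rw [pd_flux (hS ξ hξ γ), pd_flux (hS ξ hξ γ)]
    simp only [sub_mul, Finset.sum_sub_distrib]
    ring
  have circulation (s s' : Fin n) (α γ : ι) (x : EuclideanSpace ℝ (Fin n)) :
      ∑ r, ∑ β, (A r s β α * (x s' : ℂ) - A r s' β α * (x s : ℂ)) * ((x r : ℂ) * symbolInv A x γ β)
      = flux A γ α s x * x s' - flux A γ α s' x * x s := by
    simp only [flux, Finset.sum_mul, ← Finset.sum_sub_distrib]
    exact Finset.sum_congr rfl fun r _ => Finset.sum_congr rfl fun β _ => by ring
  exact and_congr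
    (forall₄_congr fun s s' α γ => forall₂_congr fun ξ hξ => by rw [curl s s' α γ hξ])
    (by simp only [circulation])

end Characterization

theorem statement18_general {n : ℕ} (hn : 2 ≤ n) {lam mu θ : ℂ} (hmu : mu ≠ 0)
    (hlam : 2 * mu + lam ≠ 0) :
    IsDistinguished (lameTensor lam mu θ : Fin n → Fin n → Fin n → Fin n → ℂ) ↔
      θ * (3 * mu + lam) = mu * (lam + mu) := by
  rw [isDistinguished_iff_flux fun ξ hξ =>
      differentiableAt_symbolInv_lameTensor θ hmu hlam hξ,
    ← lameDefect_eq_zero_iff θ hmu hlam]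
  constructor
  · rintro ⟨curl_eq_zero, circulation_eq_zero⟩
    rcases hn.eq_or_lt with rfl | hn
    · simpa [circulation_flux_lameTensor θ hmu hlam] using circulation_eq_zero rfl 0 1 1 0
    · let i : Fin n := ⟨0, by lia⟩
      let j : Fin n := ⟨1, by lia⟩
      let k : Fin n := ⟨2, hn⟩
      have hk : EuclideanSpace.single k (1 : ℝ) ≠ 0 := by simp
      simpa [curl_flux_lameTensor θ hmu hlam _ _ _ _ hk, i, j, k] using curl_eq_zero i j i j _ hk
  · intro hκ
    refine ⟨fun s s' α γ ξ hξ => ?_, ?_⟩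
    · rw [curl_flux_lameTensor θ hmu hlam γ α s s' hξ, hκ, neg_zero, zero_mul]
    · rintro rfl s s' α γ
      rw [circulation_flux_lameTensor θ hmu hlam, hκ, zero_mul, zero_mul]

/-- For the Lamé system with moduli `μ > 0`, `2μ+λ > 0`, the coefficient
tensor `A(θ)`, with entries `a^{αβ}_{rs}(θ) = μ δ_{rs}δ_{αβ} + (λ+μ-θ)δ_{rα}δ_{sβ} + θ δ_{rβ}δ_{sα}`,
is distinguished (i.e. satisfies the conditions (Ea4-fCii-n3), and (Ea4-fCii-n2B) when `n = 2`,
for the inverse `S(ξ)` of the symbol) if and only if `θ = μ(λ+μ)/(3μ+λ)`.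
Here `a θ r s α β` stands for `a^{αβ}_{rs}(θ)`. -/
theorem statement18
    (n : ℕ) (hn : 2 ≤ n)
    (lam mu : ℝ) (hmu : 0 < mu) (hlam : 0 < 2 * mu + lam)
    (a : ℝ → Fin n → Fin n → Fin n → Fin n → ℂ)
    (ha : ∀ (θ : ℝ) (r s α β : Fin n),
      a θ r s α β = (mu : ℂ) * (if r = s then 1 else 0) * (if α = β then 1 else 0)
        + ((lam : ℂ) + mu - θ) * (if r = α then 1 else 0) * (if s = β then 1 else 0)
        + (θ : ℂ) * (if r = β then 1 else 0) * (if s = α then 1 else 0))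
    (θ : ℝ)
    (S : EuclideanSpace ℝ (Fin n) → Matrix (Fin n) (Fin n) ℂ)
    (hS : ∀ ξ : EuclideanSpace ℝ (Fin n),
      S ξ = (Matrix.of fun α β : Fin n =>
        -(∑ r, ∑ s, ((ξ r : ℝ) : ℂ) * ((ξ s : ℝ) : ℂ) * a θ r s α β))⁻¹) :
    ((∀ (s s' α γ : Fin n), ∀ ξ : EuclideanSpace ℝ (Fin n), ξ ≠ 0 →
        (∑ β, (a θ s' s β α - a θ s s' β α) * S ξ γ β)
          + (∑ r, ∑ β, ((ξ r : ℝ) : ℂ) * a θ r s β α *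
              pd s' (fun ζ => S ζ γ β) ξ)
          - (∑ r, ∑ β, ((ξ r : ℝ) : ℂ) * a θ r s' β α *
              pd s (fun ζ => S ζ γ β) ξ) = 0) ∧
      (n = 2 → ∀ s s' α γ : Fin n,
        (∫ u in (0 : ℝ)..(2 * π),
          ∑ r, ∑ β,
            (a θ r s β α * ((if ((s' : ℕ) = 0) then Real.cos u else Real.sin u : ℝ) : ℂ)
              - a θ r s' β α * ((if ((s : ℕ) = 0) then Real.cos u else Real.sin u : ℝ) : ℂ))
            * (((if ((r : ℕ) = 0) then Real.cos u else Real.sin u : ℝ) : ℂ)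
                * S ((WithLp.equiv 2 (Fin n → ℝ)).symm
                      (fun i => if (i : ℕ) = 0 then Real.cos u else Real.sin u)) γ β))
          = 0))
    ↔ θ = mu * (lam + mu) / (3 * mu + lam) := by
  obtain rfl : S = symbolInv (a θ) := funext hS
  have a_eq : a θ = lameTensor (lam : ℂ) mu θ := by ext r s α β; exact ha θ r s α β
  have hmu' : (mu : ℂ) ≠ 0 := mod_cast hmu.ne'
  have hlam' : (2 * mu + lam : ℂ) ≠ 0 := mod_cast hlam.ne'
  rw [eq_div_iff (by linarith : 3 * mu + lam ≠ 0), a_eq]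
  exact (statement18_general hn hmu' hlam').trans (mod_cast Iff.rfl)

end
end
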